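/- Let Ω₀ ⊆ ℝ^{p+1} be a domain and f₀ ∈ C^ω(Ω₀, 𝔸) a real analytic function. Then D̄_x (HGCK[f₀, 0]) = GCK[D̄_{x_p} f₀] and D̄_x (HGCK[0, f₀]) = q · GCK[f₀]. -/

import Mathlib

open scoped BigOperators
open Filter Topology

namespace GPSM

variable (A : Type*) [NormedAddCommGroup A] [NormedSpace ℝ A] [Mul A] [One A]

/-- `A` is a real alternative algebra with unit `1`, of finite dimension `d > 1`,
equipped with an anti-involution `conj` (a real-linear map with `(a^c)^c = a`,
`(ab)^c = b^c a^c`, fixing the reals).  The associator is alternating (left/right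
alternative laws). -/
structure IsAltStarAlg (conj : A → A) : Prop where
  finDim : FiniteDimensional ℝ A
  one_lt_finrank : 1 < Module.finrank ℝ A
  mul_add' : ∀ a b c : A, a * (b + c) = a * b + a * c
  add_mul' : ∀ a b c : A, (a + b) * c = a * c + b * c
  smul_mul' : ∀ (r : ℝ) (a b : A), (r • a) * b = r • (a * b)
  mul_smul' : ∀ (r : ℝ) (a b : A), a * (r • b) = r • (a * b)
  one_mul' : ∀ a : A, 1 * a = a
  mul_one' : ∀ a : A, a * 1 = a
  alt_left : ∀ a b : A, a * (a * b) = a * a * b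
  alt_right : ∀ a b : A, a * b * b = a * (b * b)
  conj_add : ∀ a b : A, conj (a + b) = conj a + conj b
  conj_smul : ∀ (r : ℝ) (a : A), conj (r • a) = r • conj a
  conj_conj : ∀ a : A, conj (conj a) = a
  conj_mul : ∀ a b : A, conj (a * b) = conj b * conj a
  conj_one : conj 1 = 1

/-- `v 0, v 1, …, v m` is a hypercomplex basis of the hypercomplex subspace
`M = span(v 0, …, v m)` of `A`: `v 0 = 1`, `t(v s) = 0`, `n(v s) = 1`, the `v s`
anticommute for distinct `s, t ∈ {1,…,m}`, they are linearly independent, and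
`M` is contained in the quadratic cone `Q_A`. -/
structure IsHypBasis (conj : A → A) (v : ℕ → A) (m : ℕ) : Prop where
  v_zero : v 0 = 1
  trace_zero : ∀ s, 1 ≤ s → s ≤ m → v s + conj (v s) = 0
  norm_one : ∀ s, 1 ≤ s → s ≤ m → v s * conj (v s) = 1
  anticomm : ∀ s t, 1 ≤ s → s ≤ m → 1 ≤ t → t ≤ m → s ≠ t → v s * v t = -(v t * v s)
  indep : LinearIndependent ℝ (fun i : Fin (m + 1) => v i)
  mem_cone : ∀ x ∈ Submodule.span ℝ (Set.range fun i : Fin (m + 1) => v (i : ℕ)),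
      ∃ tr nr : ℝ, x + conj x = tr • (1 : A) ∧ x * conj x = nr • (1 : A) ∧
        ((∃ r : ℝ, x = r • (1 : A)) ∨ tr ^ 2 < 4 * nr)

variable {A}

/-- Identification of `ℝ^{m+1}` with the hypercomplex subspace `M`:
`(x_0,…,x_m) ↦ Σ x_s • v s`. -/
def emb (v : ℕ → A) (m : ℕ) (x : Fin (m + 1) → ℝ) : A :=
  ∑ s : Fin (m + 1), x s • v (s : ℕ)

/-- First `p+1` coordinates of a point of `M ≅ ℝ^{m+1}`, i.e. the `x_p`-part. -/
def projP (m p : ℕ) (x : Fin (m + 1) → ℝ) : Fin (p + 1) → ℝ := fun s =>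
  if h : (s : ℕ) < m + 1 then x ⟨(s : ℕ), h⟩ else 0

/-- Inclusion `ℝ^{p+1} ⊆ ℝ^{m+1}` (remaining coordinates `0`). -/
def injP (m p : ℕ) (y : Fin (p + 1) → ℝ) : Fin (m + 1) → ℝ := fun s =>
  if h : (s : ℕ) < p + 1 then y ⟨(s : ℕ), h⟩ else 0

/-- The coordinates of `x_q` (last `q = m - p` coordinates of `x`). -/
def xqpart (m p : ℕ) (x : Fin (m + 1) → ℝ) : Fin (m + 1) → ℝ := fun s =>
  if (s : ℕ) ≤ p then 0 else x s

/-- The coordinates of `x_p` inside `ℝ^{m+1}`. -/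
def xppart (m p : ℕ) (x : Fin (m + 1) → ℝ) : Fin (m + 1) → ℝ := fun s =>
  if (s : ℕ) ≤ p then x s else 0

/-- `r = |x_q|`. -/
noncomputable def rad (m p : ℕ) (x : Fin (m + 1) → ℝ) : ℝ :=
  Real.sqrt (∑ s : Fin (m + 1), (xqpart m p x s) ^ 2)

/-- `ω = x_q / |x_q|` (coordinates), `0` when `x_q = 0`. -/
noncomputable def normq (m p : ℕ) (x : Fin (m + 1) → ℝ) : Fin (m + 1) → ℝ :=
  (rad m p x)⁻¹ • xqpart m p x

/-- The reflection `x = x_p + x_q ↦ x_⋄ = x_p - x_q`. -/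
def reflP (m p : ℕ) (x : Fin (m + 1) → ℝ) : Fin (m + 1) → ℝ := fun s =>
  if (s : ℕ) ≤ p then x s else -x s

/-- The sphere `𝕊 = {x_q ∈ span(v_{p+1},…,v_m) : x_q² = -1}`, in coordinates. -/
def Sph (v : ℕ → A) (m p : ℕ) : Set (Fin (m + 1) → ℝ) :=
  {w | (∀ s : Fin (m + 1), (s : ℕ) ≤ p → w s = 0) ∧ emb v m w * emb v m w = -1}

/-- The point `x_p + r ω` of `M ≅ ℝ^{m+1}`. -/
def pt (m p : ℕ) (w : Fin (m + 1) → ℝ) (y : Fin (p + 1) → ℝ) (r : ℝ) :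
    Fin (m + 1) → ℝ :=
  injP m p y + r • w

/-- The slice `Ω_ω ⊆ ℝ^{p+2}` of `Ω` at `ω`. -/
def sliceSet (m p : ℕ) (Ω : Set (Fin (m + 1) → ℝ)) (w : Fin (m + 1) → ℝ) :
    Set ((Fin (p + 1) → ℝ) × ℝ) := {z | pt m p w z.1 z.2 ∈ Ω}

/-- The restriction `f_ω` of `f` to the slice at `ω`, as a function on `ℝ^{p+2}`. -/
def sliceFun (m p : ℕ) (f : (Fin (m + 1) → ℝ) → A) (w : Fin (m + 1) → ℝ) :
    (Fin (p + 1) → ℝ) × ℝ → A := fun z => f (pt m p w z.1 z.2)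

/-- Partial derivative `∂_{x_s}` of a function on `ℝ^{m+1}`. -/
noncomputable def pdF (m : ℕ) (s : Fin (m + 1)) (f : (Fin (m + 1) → ℝ) → A)
    (x : Fin (m + 1) → ℝ) : A := fderiv ℝ f x (Pi.single s 1)

/-- Partial derivative `∂_{x_s}` of a function on `ℝ^{p+1}`. -/
noncomputable def pdP (p : ℕ) (s : Fin (p + 1)) (g : (Fin (p + 1) → ℝ) → A)
    (y : Fin (p + 1) → ℝ) : A := fderiv ℝ g y (Pi.single s 1)

/-- Partial derivative `∂_{x_s}` of a function on `ℝ^{p+2} = ℝ^{p+1} × ℝ`. -/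
noncomputable def pdSx (p : ℕ) (s : Fin (p + 1)) (G : (Fin (p + 1) → ℝ) × ℝ → A)
    (z : (Fin (p + 1) → ℝ) × ℝ) : A := fderiv ℝ G z (Pi.single s 1, 0)

/-- Partial derivative `∂_r` of a function on `ℝ^{p+2} = ℝ^{p+1} × ℝ`. -/
noncomputable def pdSr (p : ℕ) (G : (Fin (p + 1) → ℝ) × ℝ → A)
    (z : (Fin (p + 1) → ℝ) × ℝ) : A := fderiv ℝ G z (0, 1)

/-- Second partial derivative `∂_r²`. -/
noncomputable def pdSr2 (p : ℕ) (G : (Fin (p + 1) → ℝ) × ℝ → A)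
    (z : (Fin (p + 1) → ℝ) × ℝ) : A := pdSr p (pdSr p G) z

/-- The operator `Σ_{lo ≤ s ≤ hi} v_s ∂_{x_s}` on functions on `ℝ^{m+1}`.
`Dop v m 0 p` is `D_{x_p}`, `Dop v m (p+1) m` is `D_{x_q}`, `Dop v m 0 m` is `D_x`. -/
noncomputable def Dop (v : ℕ → A) (m lo hi : ℕ) (f : (Fin (m + 1) → ℝ) → A)
    (x : Fin (m + 1) → ℝ) : A :=
  ∑ s : Fin (m + 1), if lo ≤ (s : ℕ) ∧ (s : ℕ) ≤ hi then v (s : ℕ) * pdF m s f x else 0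

/-- The conjugate operator `∂_{x_0} - Σ_{1 ≤ s ≤ hi} v_s ∂_{x_s}` on functions on
`ℝ^{m+1}`; `Dbarop v m p` is `D̄_{x_p}`, `Dbarop v m m` is `D̄_x`. -/
noncomputable def Dbarop (v : ℕ → A) (m hi : ℕ) (f : (Fin (m + 1) → ℝ) → A)
    (x : Fin (m + 1) → ℝ) : A :=
  pdF m 0 f x -
    ∑ s : Fin (m + 1), if 1 ≤ (s : ℕ) ∧ (s : ℕ) ≤ hi then v (s : ℕ) * pdF m s f x else 0

/-- The operator `D_{x_p} = Σ_{s=0}^p v_s ∂_{x_s}` on functions on `ℝ^{p+1}`. -/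
noncomputable def DopP (v : ℕ → A) (p : ℕ) (g : (Fin (p + 1) → ℝ) → A)
    (y : Fin (p + 1) → ℝ) : A :=
  ∑ s : Fin (p + 1), v (s : ℕ) * pdP p s g y

/-- The operator `D̄_{x_p} = ∂_{x_0} - Σ_{s=1}^p v_s ∂_{x_s}` on functions on `ℝ^{p+1}`. -/
noncomputable def DbaropP (v : ℕ → A) (p : ℕ) (g : (Fin (p + 1) → ℝ) → A)
    (y : Fin (p + 1) → ℝ) : A :=
  pdP p 0 g y - ∑ s : Fin (p + 1), if 1 ≤ (s : ℕ) then v (s : ℕ) * pdP p s g y else 0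

/-- The operator `D_{x_p}` on functions on `ℝ^{p+2} = ℝ^{p+1} × ℝ`. -/
noncomputable def DopSx (v : ℕ → A) (p : ℕ) (G : (Fin (p + 1) → ℝ) × ℝ → A)
    (z : (Fin (p + 1) → ℝ) × ℝ) : A :=
  ∑ s : Fin (p + 1), v (s : ℕ) * pdSx p s G z

/-- The operator `D̄_{x_p}` on functions on `ℝ^{p+2} = ℝ^{p+1} × ℝ`. -/
noncomputable def DbaropSx (v : ℕ → A) (p : ℕ) (G : (Fin (p + 1) → ℝ) × ℝ → A)
    (z : (Fin (p + 1) → ℝ) × ℝ) : A :=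
  pdSx p 0 G z - ∑ s : Fin (p + 1), if 1 ≤ (s : ℕ) then v (s : ℕ) * pdSx p s G z else 0

/-- The Laplacian `Δ_x` on functions on `ℝ^{m+1}`. -/
noncomputable def lapF (m : ℕ) (f : (Fin (m + 1) → ℝ) → A)
    (x : Fin (m + 1) → ℝ) : A :=
  ∑ s : Fin (m + 1), pdF m s (pdF m s f) x

/-- The Laplacian `Δ_{x_p}` on functions on `ℝ^{p+1}`. -/
noncomputable def lapP (p : ℕ) (g : (Fin (p + 1) → ℝ) → A)
    (y : Fin (p + 1) → ℝ) : A :=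
  ∑ s : Fin (p + 1), pdP p s (pdP p s g) y

/-- Iterated Laplacian `Δ_x^k`. -/
noncomputable def lapIterF (m k : ℕ) (f : (Fin (m + 1) → ℝ) → A) :
    (Fin (m + 1) → ℝ) → A :=
  (fun g => lapF m g)^[k] f

/-- Iterated Laplacian `Δ_{x_p}^k`. -/
noncomputable def lapIterP (p k : ℕ) (g : (Fin (p + 1) → ℝ) → A) :
    (Fin (p + 1) → ℝ) → A :=
  (fun h => lapP p h)^[k] g

/-- The Laplacian `Δ_{x'} = Δ_{x_p} + ∂_r²` on functions on `ℝ^{p+2}`. -/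
noncomputable def lapSx (p : ℕ) (G : (Fin (p + 1) → ℝ) × ℝ → A)
    (z : (Fin (p + 1) → ℝ) × ℝ) : A :=
  (∑ s : Fin (p + 1), pdSx p s (pdSx p s G) z) + pdSr2 p G z

/-- The slice Cauchy-Riemann operator `D_ω = D_{x_p} + ω ∂_r` applied to a function
on `ℝ^{p+2}`, where `ω` is given in coordinates by `w`. -/
noncomputable def DomCR (v : ℕ → A) (m p : ℕ) (w : Fin (m + 1) → ℝ)
    (G : (Fin (p + 1) → ℝ) × ℝ → A) (z : (Fin (p + 1) → ℝ) × ℝ) : A :=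
  DopSx v p G z + emb v m w * pdSr p G z

/-- `f` is left generalized partial-slice monogenic (of type `(p, m-p)`) on `Ω`. -/
def GSM (v : ℕ → A) (m p : ℕ) (f : (Fin (m + 1) → ℝ) → A)
    (Ω : Set (Fin (m + 1) → ℝ)) : Prop :=
  ∀ w ∈ Sph v m p, ContDiffOn ℝ 1 (sliceFun m p f w) (sliceSet m p Ω w) ∧
    ∀ z ∈ sliceSet m p Ω w, DomCR v m p w (sliceFun m p f w) z = 0

/-- `Ω` is partially symmetric with respect to `ℝ^{p+1}`. -/
def PSym (v : ℕ → A) (m p : ℕ) (Ω : Set (Fin (m + 1) → ℝ)) : Prop :=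
  ∀ x ∈ Ω, ∀ w ∈ Sph v m p, xppart m p x + rad m p x • w ∈ Ω

/-- `Ω` is a slice domain: a domain meeting `ℝ^{p+1}` all of whose slices are
domains in `ℝ^{p+2}`. -/
def SliceDomain (v : ℕ → A) (m p : ℕ) (Ω : Set (Fin (m + 1) → ℝ)) : Prop :=
  IsOpen Ω ∧ IsConnected Ω ∧ (∃ x ∈ Ω, xqpart m p x = 0) ∧
    ∀ w ∈ Sph v m p, IsConnected (sliceSet m p Ω w)

/-- The reflection `(x_p, r) ↦ (x_p, -r)` of `ℝ^{p+2}`. -/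
def reflD (p : ℕ) (z : (Fin (p + 1) → ℝ) × ℝ) : (Fin (p + 1) → ℝ) × ℝ := (z.1, -z.2)

/-- The p-symmetric completion `Ω_D ⊆ M` of `D ⊆ ℝ^{p+2}`. -/
def OmegaD (v : ℕ → A) (m p : ℕ) (D : Set ((Fin (p + 1) → ℝ) × ℝ)) :
    Set (Fin (m + 1) → ℝ) :=
  {x | ∃ w ∈ Sph v m p, ∃ z ∈ D, x = pt m p w z.1 z.2}

/-- `(F₁, F₂)` satisfies the even-odd (stem function) conditions on `D`. -/
def IsStem (p : ℕ) (D : Set ((Fin (p + 1) → ℝ) × ℝ))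
    (F₁ F₂ : (Fin (p + 1) → ℝ) × ℝ → A) : Prop :=
  ∀ z ∈ D, F₁ (reflD p z) = F₁ z ∧ F₂ (reflD p z) = -F₂ z

/-- `f` is the generalized partial-slice function induced by the stem `(F₁, F₂)`:
`f(x_p + rω) = F₁(x_p, r) + ω F₂(x_p, r)`. -/
def Induced (v : ℕ → A) (m p : ℕ) (D : Set ((Fin (p + 1) → ℝ) × ℝ))
    (F₁ F₂ : (Fin (p + 1) → ℝ) × ℝ → A) (f : (Fin (m + 1) → ℝ) → A) : Prop :=
  ∀ w ∈ Sph v m p, ∀ z ∈ D, f (pt m p w z.1 z.2) = F₁ z + emb v m w * F₂ z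

/-- The generalized Cauchy-Riemann system for the stem `(F₁, F₂)` on `D`. -/
def StemCR (v : ℕ → A) (p : ℕ) (D : Set ((Fin (p + 1) → ℝ) × ℝ))
    (F₁ F₂ : (Fin (p + 1) → ℝ) × ℝ → A) : Prop :=
  ∀ z ∈ D, DopSx v p F₁ z - pdSr p F₂ z = 0 ∧ DbaropSx v p F₂ z + pdSr p F₁ z = 0

/-- `f` is generalized partial-slice regular on `Ω_D`. -/
def MemGSR (v : ℕ → A) (m p : ℕ) (D : Set ((Fin (p + 1) → ℝ) × ℝ))
    (f : (Fin (m + 1) → ℝ) → A) : Prop :=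
  ∃ F₁ F₂ : (Fin (p + 1) → ℝ) × ℝ → A, IsStem p D F₁ F₂ ∧
    ContDiffOn ℝ 1 F₁ D ∧ ContDiffOn ℝ 1 F₂ D ∧
    Induced v m p D F₁ F₂ f ∧ StemCR v p D F₁ F₂

/-- `f` is a generalized partial-slice function on `Ω`. -/
def MemGS (v : ℕ → A) (m p : ℕ) (Ω : Set (Fin (m + 1) → ℝ))
    (f : (Fin (m + 1) → ℝ) → A) : Prop :=
  ∃ F₁ F₂ : (Fin (p + 1) → ℝ) × ℝ → A,
    (∀ z : (Fin (p + 1) → ℝ) × ℝ, F₁ (reflD p z) = F₁ z ∧ F₂ (reflD p z) = -F₂ z) ∧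
    ∀ x ∈ Ω, f x = F₁ (projP m p x, rad m p x) +
      emb v m (normq m p x) * F₂ (projP m p x, rad m p x)

/-- Non-associative power: `a^n` with products taken from the right. -/
def apow (a : A) (n : ℕ) : A := (fun b => a * b)^[n] 1

/-- Partial even part `PE[f](x) = (f(x) + f(x_⋄))/2`. -/
noncomputable def PE (m p : ℕ) (f : (Fin (m + 1) → ℝ) → A)
    (x : Fin (m + 1) → ℝ) : A := (2 : ℝ)⁻¹ • (f x + f (reflP m p x))

/-- Partial odd part `PO[f](x) = (f(x) - f(x_⋄))/2`. -/
noncomputable def PO (m p : ℕ) (f : (Fin (m + 1) → ℝ) → A)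
    (x : Fin (m + 1) → ℝ) : A := (2 : ℝ)⁻¹ • (f x - f (reflP m p x))

/-- `Ω₀* = {x_p + x_q : x_p ∈ Ω₀, x_q ∈ ℝ^q}`. -/
def Omega0star (m p : ℕ) (Ω₀ : Set (Fin (p + 1) → ℝ)) : Set (Fin (m + 1) → ℝ) :=
  {x | projP m p x ∈ Ω₀}

/-- The spherical derivative `f'_s(x) = (1/2) x_q⁻¹ (f(x) - f(x_⋄))`
(using `x_q⁻¹ = -x_q/|x_q|²`). -/
noncomputable def sder (v : ℕ → A) (m p : ℕ) (f : (Fin (m + 1) → ℝ) → A)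
    (x : Fin (m + 1) → ℝ) : A :=
  -(((2 : ℝ) * rad m p x ^ 2)⁻¹) • (emb v m (xqpart m p x) * (f x - f (reflP m p x)))

/-- The spherical Dirac operator
`Γ f = -(1/2) Σ_{p+1 ≤ i,j ≤ m} v_i (v_j (L_{ij} f))`. -/
noncomputable def sphericalGamma (v : ℕ → A) (m p : ℕ) (f : (Fin (m + 1) → ℝ) → A)
    (x : Fin (m + 1) → ℝ) : A :=
  -((2 : ℝ)⁻¹) • ∑ i : Fin (m + 1), ∑ j : Fin (m + 1),
    if p < (i : ℕ) ∧ p < (j : ℕ) then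
      v (i : ℕ) * (v (j : ℕ) * (x i • pdF m j f x - x j • pdF m i f x)) else 0

/-- The slice Cauchy-Riemann operator `D_ω` applied to (the slice restriction of) a
function `f` on `M`, at the point `x` (with `ω = x_q/|x_q|`). -/
noncomputable def DomCRat (v : ℕ → A) (m p : ℕ) (f : (Fin (m + 1) → ℝ) → A)
    (x : Fin (m + 1) → ℝ) : A :=
  DomCR v m p (normq m p x) (sliceFun m p f (normq m p x)) (projP m p x, rad m p x)

/-- `f` is left monogenic on `Ω`: `f ∈ C¹` and `D_x f = 0`. -/
def Monogenic (v : ℕ → A) (m : ℕ) (f : (Fin (m + 1) → ℝ) → A)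
    (Ω : Set (Fin (m + 1) → ℝ)) : Prop :=
  ContDiffOn ℝ 1 f Ω ∧ ∀ x ∈ Ω, Dop v m 0 m f x = 0

/-- `f` is harmonic on `Ω`: `f ∈ C²` and `Δ_x f = 0`. -/
def Harmonic (m : ℕ) (f : (Fin (m + 1) → ℝ) → A)
    (Ω : Set (Fin (m + 1) → ℝ)) : Prop :=
  ContDiffOn ℝ 2 f Ω ∧ ∀ x ∈ Ω, lapF m f x = 0

/-- A family of functions converges normally (locally a summable uniform bound). -/
def NormallyConvOn {E F : Type*} [TopologicalSpace E] [NormedAddCommGroup F]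
    (u : ℕ → E → F) (s : Set E) : Prop :=
  ∀ x ∈ s, ∃ U ∈ nhds x, ∃ c : ℕ → ℝ, Summable c ∧ ∀ k : ℕ, ∀ y ∈ U, ‖u k y‖ ≤ c k

/-- The generalized partial-slice CK-extension
`CK[f₀](x) = Σ_k (r^{2k}/(2k)!)(-Δ_{x_p})^k f₀(x_p)
  + ω Σ_k (r^{2k+1}/(2k+1)!)(-Δ_{x_p})^k (D_{x_p} f₀)(x_p)`. -/
noncomputable def CKe (v : ℕ → A) (m p : ℕ) (f₀ : (Fin (p + 1) → ℝ) → A)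
    (x : Fin (m + 1) → ℝ) : A :=
  (∑' k : ℕ, (((-1 : ℝ) ^ k * rad m p x ^ (2 * k)) / (2 * k).factorial) •
      lapIterP p k f₀ (projP m p x)) +
  emb v m (normq m p x) *
    ∑' k : ℕ, (((-1 : ℝ) ^ k * rad m p x ^ (2 * k + 1)) / (2 * k + 1).factorial) •
      lapIterP p k (DopP v p f₀) (projP m p x)

/-- The coefficient `Γ(q/2)(-1)^k r^{2k} / (2^{2k} k! Γ(k + q/2))`. -/
noncomputable def hgckC (q k : ℕ) (r : ℝ) : ℝ :=
  (Real.Gamma ((q : ℝ) / 2) * (-1) ^ k * r ^ (2 * k)) /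
    (2 ^ (2 * k) * (k.factorial : ℝ) * Real.Gamma ((k : ℝ) + (q : ℝ) / 2))

/-- The coefficient `Γ(q/2)(-1)^k r^{2k} / (2^{2k+1} k! Γ(k + q/2 + 1))`. -/
noncomputable def gckC' (q k : ℕ) (r : ℝ) : ℝ :=
  (Real.Gamma ((q : ℝ) / 2) * (-1) ^ k * r ^ (2 * k)) /
    (2 ^ (2 * k + 1) * (k.factorial : ℝ) * Real.Gamma ((k : ℝ) + (q : ℝ) / 2 + 1))

/-- The coefficient `Γ(q/2 + 1)(-1)^k r^{2k} / (2^{2k} k! Γ(k + q/2 + 1))`. -/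
noncomputable def hgckC' (q k : ℕ) (r : ℝ) : ℝ :=
  (Real.Gamma ((q : ℝ) / 2 + 1) * (-1) ^ k * r ^ (2 * k)) /
    (2 ^ (2 * k) * (k.factorial : ℝ) * Real.Gamma ((k : ℝ) + (q : ℝ) / 2 + 1))

/-- The monogenic generalized CK-extension `GCK[A₀]`. -/
noncomputable def GCKe (v : ℕ → A) (m p : ℕ) (A₀ : (Fin (p + 1) → ℝ) → A)
    (x : Fin (m + 1) → ℝ) : A :=
  (∑' k : ℕ, hgckC (m - p) k (rad m p x) • lapIterP p k A₀ (projP m p x)) +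
  emb v m (xqpart m p x) *
    ∑' k : ℕ, gckC' (m - p) k (rad m p x) • lapIterP p k (DopP v p A₀) (projP m p x)

/-- The harmonic generalized CK-extension `HGCK[A₀, A₁]`. -/
noncomputable def HGCKe (v : ℕ → A) (m p : ℕ) (A₀ A₁ : (Fin (p + 1) → ℝ) → A)
    (x : Fin (m + 1) → ℝ) : A :=
  (∑' k : ℕ, hgckC (m - p) k (rad m p x) • lapIterP p k A₀ (projP m p x)) +
  emb v m (xqpart m p x) *
    ∑' k : ℕ, hgckC' (m - p) k (rad m p x) • lapIterP p k A₁ (projP m p x)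

/-- The operator `(1/r)∂_r`, extended to `r = 0` by its limit `∂_r²` (on even
functions). -/
noncomputable def T1 (p : ℕ) (G : (Fin (p + 1) → ℝ) × ℝ → A) :
    (Fin (p + 1) → ℝ) × ℝ → A := fun z =>
  if z.2 = 0 then pdSr2 p G z else (z.2)⁻¹ • pdSr p G z

/-- The operator `∂_r ∘ (1/r)`, extended to `r = 0` by its limit `(1/2)∂_r²` (on odd
functions). -/
noncomputable def T2 (p : ℕ) (G : (Fin (p + 1) → ℝ) × ℝ → A) :
    (Fin (p + 1) → ℝ) × ℝ → A := fun z =>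
  if z.2 = 0 then (2 : ℝ)⁻¹ • pdSr2 p G z
  else fderiv ℝ (fun t : ℝ => t⁻¹ • G (z.1, t)) z.2 1

/-- `C_q(k) = (q-1)(q-3)⋯(q-2k+1)`, `C_q(0) = 1`. -/
noncomputable def cq (q k : ℕ) : ℝ :=
  ∏ i ∈ Finset.range k, ((q : ℝ) - (2 * (i : ℝ) + 1))

/-- Double factorial. -/
def dfac : ℕ → ℕ
  | 0 => 1
  | 1 => 1
  | n + 2 => (n + 2) * dfac n

/-- The Fueter-Sce constant `γ_q = (-1)^{(q-1)/2} (q-1)!!/(q-2)!!`. -/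
noncomputable def gammaQ (q : ℕ) : ℝ :=
  (-1 : ℝ) ^ ((q - 1) / 2) * (dfac (q - 1) : ℝ) / (dfac (q - 2) : ℝ)

/-!
Left alternativity makes the left multiplications by `v₁, …, v_m` satisfy the Clifford relations
as operators, so that `D_{x_p} D̄_{x_p} = Δ_{x_p}` and `x_q (x_q a) = -|x_q|² a` without
associativity. The extensions are built from the series `Σ c_k ρ^k Δ^k f(x_p)` at `ρ = |x_q|²`,
which Cauchy's estimates let us differentiate termwise near `ρ = 0`. For a function `Φ` of
`(x_p, ρ)` the chain rule gives
`D̄_x Φ = D̄_{x_p} Φ - 2 x_q ∂_ρ Φ` and `D̄_x (x_q Φ) = q Φ + 2 ρ ∂_ρ Φ + x_q D_{x_p} Φ`,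
and the two identities are then the recurrences between the coefficients of the three series.
-/

/-- `A` is unital from the left and left alternative, with `ℝ`-bilinear product continuous in its
second factor; `lmul` bundles the product accordingly. -/
structure IsLeftAltMul (lmul : A →ₗ[ℝ] A →L[ℝ] A) : Prop where
  lmul_apply : ∀ a b : A, lmul a b = a * b
  one_mul : ∀ a : A, 1 * a = a
  alt_left : ∀ a b : A, a * (a * b) = a * a * b

/-- `v 0 = 1`, and `v 1, …, v m` are anticommuting square roots of `-1`. -/
structure IsCliffordFrame (v : ℕ → A) (m : ℕ) : Prop where
  v_zero : v 0 = 1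
  mul_self : ∀ s, 1 ≤ s → s ≤ m → v s * v s = -1
  anticomm : ∀ s t, 1 ≤ s → s ≤ m → 1 ≤ t → t ≤ m → s ≠ t → v s * v t = -(v t * v s)

/-- The conjugate frame `1, -v₁, …, -v_m`, so that `D̄` is the operator `D` of this frame. -/
def conjFrame {E : Type*} [Neg E] (v : ℕ → E) (s : ℕ) : E := if s = 0 then v 0 else -v s

theorem sum_sum_eq_sum_diag_of_antisymm {ι M : Type*} [Fintype ι] [AddCommGroup M]
    (B : ι → ι → M) (hB : ∀ s t, s ≠ t → B s t = -B t s) :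
    ∑ s, ∑ t, B s t = ∑ s, B s s := by
  classical
  have hoff : ∑ z ∈ (Finset.univ : Finset ι).offDiag, B z.1 z.2 = 0 := by
    refine Finset.sum_involution (fun z _ => z.swap) ?_ ?_ ?_ fun _ _ => Prod.swap_swap _
    · rintro ⟨s, t⟩ hst
      simp [hB s t (by simpa using hst)]
    · rintro ⟨s, t⟩ hst _
      simpa [eq_comm] using hst
    · rintro ⟨s, t⟩ hst
      simpa [eq_comm] using hst
  rw [← Finset.sum_product', ← Finset.diag_union_offDiag,
    Finset.sum_union (Finset.disjoint_diag_offDiag _), hoff, add_zero, Finset.sum_diag]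

namespace IsLeftAltMul

variable {lmul : A →ₗ[ℝ] A →L[ℝ] A}

theorem neg_mul (hA : IsLeftAltMul lmul) (a b : A) : -a * b = -(a * b) := by
  simp only [← hA.lmul_apply, map_neg, neg_apply]

theorem mul_neg (hA : IsLeftAltMul lmul) (a b : A) : a * -b = -(a * b) := by
  simp only [← hA.lmul_apply, map_neg]

theorem mul_smul (hA : IsLeftAltMul lmul) (c : ℝ) (a b : A) : a * c • b = c • (a * b) := by
  simp only [← hA.lmul_apply, map_smul]

theorem mul_sum (hA : IsLeftAltMul lmul) {ι : Type*} (S : Finset ι) (a : A) (b : ι → A) :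
    a * ∑ i ∈ S, b i = ∑ i ∈ S, a * b i := by
  simp only [← hA.lmul_apply, map_sum]

theorem mul_mul_eq_neg_of_anticomm (hA : IsLeftAltMul lmul) {a b : A} (hab : a * b = -(b * a))
    (x : A) : a * (b * x) = -(b * (a * x)) := by
  have key : lmul (a + b) (lmul (a + b) x) = lmul (lmul (a + b) (a + b)) x := by
    simpa only [hA.lmul_apply] using hA.alt_left (a + b) x
  simp only [map_add, add_apply, hA.lmul_apply, hab, map_neg, neg_apply, ← hA.alt_left] at key
  rw [← sub_eq_zero] at key ⊢
  rw [← key]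
  abel

end IsLeftAltMul

section Frame

variable {lmul : A →ₗ[ℝ] A →L[ℝ] A} {v : ℕ → A} {m : ℕ}

theorem IsLeftAltMul.emb_mul (hA : IsLeftAltMul lmul) (w : Fin (m + 1) → ℝ) (a : A) :
    emb v m w * a = ∑ s, w s • (v s * a) := by
  simp only [emb, ← hA.lmul_apply, map_sum, map_smul, sum_apply, smul_apply]

namespace IsCliffordFrame

theorem zero_mul (hv : IsCliffordFrame v m) (hA : IsLeftAltMul lmul) (a : A) : v 0 * a = a := by
  rw [hv.v_zero, hA.one_mul]

theorem mul_mul_self (hv : IsCliffordFrame v m) (hA : IsLeftAltMul lmul) {s : ℕ} (hs : s ≠ 0)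
    (hsm : s ≤ m) (a : A) : v s * (v s * a) = -a := by
  rw [hA.alt_left, hv.mul_self s (Nat.pos_of_ne_zero hs) hsm, hA.neg_mul, hA.one_mul]

theorem mul_mul_anticomm (hv : IsCliffordFrame v m) (hA : IsLeftAltMul lmul) {s t : ℕ}
    (hs : s ≠ 0) (hsm : s ≤ m) (ht : t ≠ 0) (htm : t ≤ m) (hst : s ≠ t) (a : A) :
    v s * (v t * a) = -(v t * (v s * a)) :=
  hA.mul_mul_eq_neg_of_anticomm
    (hv.anticomm s t (Nat.pos_of_ne_zero hs) hsm (Nat.pos_of_ne_zero ht) htm hst) a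

theorem mul_conjFrame_mul (hv : IsCliffordFrame v m) (hA : IsLeftAltMul lmul) {s : ℕ}
    (hsm : s ≤ m) (a : A) : v s * (conjFrame v s * a) = a := by
  rcases eq_or_ne s 0 with rfl | hs
  · simp only [conjFrame, if_true, hv.zero_mul hA]
  · rw [conjFrame, if_neg hs, hA.neg_mul, hA.mul_neg, hv.mul_mul_self hA hs hsm, neg_neg]

theorem conjFrame_mul_mul (hv : IsCliffordFrame v m) (hA : IsLeftAltMul lmul) {s : ℕ}
    (hsm : s ≤ m) (a : A) : conjFrame v s * (v s * a) = a := by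
  rcases eq_or_ne s 0 with rfl | hs
  · simp only [conjFrame, if_true, hv.zero_mul hA]
  · rw [conjFrame, if_neg hs, hA.neg_mul, hv.mul_mul_self hA hs hsm, neg_neg]

theorem mul_conjFrame_mul_antisymm (hv : IsCliffordFrame v m) (hA : IsLeftAltMul lmul) {s t : ℕ}
    (hsm : s ≤ m) (htm : t ≤ m) (hst : s ≠ t) (a : A) :
    v s * (conjFrame v t * a) = -(v t * (conjFrame v s * a)) := by
  rcases eq_or_ne s 0 with rfl | hs
  · rw [conjFrame, conjFrame, if_neg hst.symm, if_pos rfl, hv.zero_mul hA, hv.zero_mul hA,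
      hA.neg_mul]
  rcases eq_or_ne t 0 with rfl | ht
  · rw [conjFrame, conjFrame, if_neg hst, if_pos rfl, hv.zero_mul hA, hv.zero_mul hA, hA.neg_mul,
      neg_neg]
  rw [conjFrame, conjFrame, if_neg hs, if_neg ht, hA.neg_mul, hA.neg_mul, hA.mul_neg, hA.mul_neg,
    hv.mul_mul_anticomm hA hs hsm ht htm hst]

theorem conjFrame_mul_emb_mul (hv : IsCliffordFrame v m) (hA : IsLeftAltMul lmul) {p s : ℕ}
    (hp : p ≤ m) (hs : s ≤ p) {w : Fin (m + 1) → ℝ}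
    (hw : ∀ t : Fin (m + 1), (t : ℕ) ≤ p → w t = 0) (a : A) :
    conjFrame v s * (emb v m w * a) = emb v m w * (v s * a) := by
  simp only [hA.emb_mul, hA.mul_sum, hA.mul_smul]
  refine Finset.sum_congr rfl fun t _ => ?_
  by_cases ht : (t : ℕ) ≤ p
  · simp only [hw t ht, zero_smul]
  rcases eq_or_ne s 0 with rfl | hs0
  · simp only [conjFrame, if_true, hv.zero_mul hA]
  · rw [conjFrame, if_neg hs0, hA.neg_mul, hv.mul_mul_anticomm hA hs0 (hs.trans hp) (by lia)
      (Nat.lt_succ_iff.1 t.2) (by lia), neg_neg]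

theorem emb_mul_emb_mul (hv : IsCliffordFrame v m) (hA : IsLeftAltMul lmul)
    {w : Fin (m + 1) → ℝ} (hw : w 0 = 0) (a : A) :
    emb v m w * (emb v m w * a) = -((∑ s, w s ^ 2) • a) := by
  simp only [hA.emb_mul, hA.mul_sum, hA.mul_smul, Finset.smul_sum]
  have hne : ∀ s : Fin (m + 1), s ≠ 0 → (s : ℕ) ≠ 0 := fun s hs h => hs (Fin.ext h)
  have hle : ∀ s : Fin (m + 1), (s : ℕ) ≤ m := fun s => Nat.lt_succ_iff.1 s.2
  rw [sum_sum_eq_sum_diag_of_antisymm, Finset.sum_smul, ← Finset.sum_neg_distrib]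
  · refine Finset.sum_congr rfl fun s _ => ?_
    rcases eq_or_ne s 0 with rfl | hs
    · simp [hw]
    · rw [hv.mul_mul_self hA (hne s hs) (hle s), smul_neg, smul_neg, smul_smul, pow_two]
  · intro s t hst
    rcases eq_or_ne s 0 with rfl | hs
    · simp [hw]
    rcases eq_or_ne t 0 with rfl | ht
    · simp [hw]
    rw [hv.mul_mul_anticomm hA (hne s hs) (hle s) (hne t ht) (hle t) (Fin.val_ne_of_ne hst),
      smul_neg, smul_neg, smul_comm]

theorem sum_sq_eq_one_of_mem_Sph [Nontrivial A] (hv : IsCliffordFrame v m)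
    (hA : IsLeftAltMul lmul) {p : ℕ} {w : Fin (m + 1) → ℝ} (hw : w ∈ Sph v m p) :
    ∑ s, w s ^ 2 = 1 := by
  obtain ⟨a, ha⟩ := exists_ne (0 : A)
  have hsq : emb v m w * (emb v m w * a) = -((1 : ℝ) • a) := by
    rw [hA.alt_left, hw.2, hA.neg_mul, hA.one_mul, one_smul]
  rw [hv.emb_mul_emb_mul hA (hw.1 0 (Nat.zero_le p)), neg_inj] at hsq
  exact smul_left_injective ℝ ha hsq

end IsCliffordFrame

end Frame

section FlatCalculus

variable {F : Type*} [NormedAddCommGroup F] [NormedSpace ℝ F] {p : ℕ}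
  {g h : (Fin (p + 1) → ℝ) → F} {y : Fin (p + 1) → ℝ}

theorem pdP_congr (s : Fin (p + 1)) (hgh : g =ᶠ[𝓝 y] h) : pdP p s g =ᶠ[𝓝 y] pdP p s h := by
  filter_upwards [hgh.eventuallyEq_nhds] with z hz
  simp only [pdP, hz.fderiv_eq]

theorem lapP_congr (hgh : g =ᶠ[𝓝 y] h) : lapP p g =ᶠ[𝓝 y] lapP p h := by
  filter_upwards [hgh.eventuallyEq_nhds] with z hz
  exact Finset.sum_congr rfl fun s _ => (pdP_congr s (pdP_congr s hz)).eq_of_nhds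

theorem lapIterP_succ (k : ℕ) (g : (Fin (p + 1) → ℝ) → F) :
    lapIterP p (k + 1) g = lapIterP p k (lapP p g) := rfl

theorem lapIterP_succ' (k : ℕ) (g : (Fin (p + 1) → ℝ) → F) :
    lapIterP p (k + 1) g = lapP p (lapIterP p k g) :=
  Function.iterate_succ_apply' _ k g

theorem lapIterP_congr (k : ℕ) (hgh : g =ᶠ[𝓝 y] h) : lapIterP p k g =ᶠ[𝓝 y] lapIterP p k h := by
  induction k with
  | zero => exact hgh
  | succ k ih => simpa only [lapIterP_succ'] using lapP_congr ih

theorem lapIterP_zero_fun (k : ℕ) : lapIterP p k (0 : (Fin (p + 1) → ℝ) → F) = 0 := by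
  have hpd : ∀ s, pdP p s (0 : (Fin (p + 1) → ℝ) → F) = 0 := fun s => by ext y; simp [pdP]
  refine Function.iterate_fixed ?_ k
  ext y
  simp [lapP, hpd]

theorem pdP_sum {ι : Type*} {S : Finset ι} {G : ι → (Fin (p + 1) → ℝ) → F}
    (hG : ∀ i ∈ S, DifferentiableAt ℝ (G i) y) (s : Fin (p + 1)) :
    pdP p s (fun z => ∑ i ∈ S, G i z) y = ∑ i ∈ S, pdP p s (G i) y := by
  simp only [pdP, fderiv_fun_sum hG, sum_apply]

theorem pdP_clm_comp {F' : Type*} [NormedAddCommGroup F'] [NormedSpace ℝ F'] (T : F →L[ℝ] F')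
    (hg : DifferentiableAt ℝ g y) (s : Fin (p + 1)) :
    pdP p s (fun z => T (g z)) y = T (pdP p s g y) :=
  congrArg (· (Pi.single s 1)) (T.hasFDerivAt.comp y hg.hasFDerivAt).fderiv

variable [CompleteSpace F]

theorem analyticAt_pdP (hg : AnalyticAt ℝ g y) (s : Fin (p + 1)) : AnalyticAt ℝ (pdP p s g) y :=
  ((ContinuousLinearMap.apply ℝ F (Pi.single s (1 : ℝ) : Fin (p + 1) → ℝ)).analyticAt _).comp
    hg.fderiv

theorem analyticAt_lapP (hg : AnalyticAt ℝ g y) : AnalyticAt ℝ (lapP p g) y :=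
  Finset.analyticAt_fun_sum _ fun s _ => analyticAt_pdP (analyticAt_pdP hg s) s

theorem analyticAt_lapIterP (hg : AnalyticAt ℝ g y) (k : ℕ) : AnalyticAt ℝ (lapIterP p k g) y := by
  induction k with
  | zero => exact hg
  | succ k ih => simpa only [lapIterP_succ'] using analyticAt_lapP ih

theorem pdP_pdP_eq_fderiv_fderiv (hg : AnalyticAt ℝ g y) (s t : Fin (p + 1)) :
    pdP p s (pdP p t g) y = fderiv ℝ (fderiv ℝ g) y (Pi.single s 1) (Pi.single t 1) :=
  pdP_clm_comp (ContinuousLinearMap.apply ℝ F (Pi.single t 1)) hg.fderiv.differentiableAt s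

theorem pdP_comm (hg : AnalyticAt ℝ g y) (s t : Fin (p + 1)) :
    pdP p s (pdP p t g) =ᶠ[𝓝 y] pdP p t (pdP p s g) := by
  filter_upwards [hg.eventually_analyticAt] with z hz
  rw [pdP_pdP_eq_fderiv_fderiv hz, pdP_pdP_eq_fderiv_fderiv hz]
  exact hz.contDiffAt.isSymmSndFDerivAt_of_omega _ _

end FlatCalculus

section DiracOperators

variable {lmul : A →ₗ[ℝ] A →L[ℝ] A} {v : ℕ → A} {m p : ℕ}
  {g : (Fin (p + 1) → ℝ) → A} {y : Fin (p + 1) → ℝ}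

theorem DbaropP_eq_DopP_conjFrame (hA : IsLeftAltMul lmul) (hv : IsCliffordFrame v m) :
    DbaropP v p = DopP (conjFrame v) p := by
  ext g y
  simp only [DbaropP, DopP, Fin.sum_univ_succ]
  simp [conjFrame, hv.zero_mul hA, hA.neg_mul, sub_eq_add_neg]

theorem Dbarop_eq_sum_conjFrame (hA : IsLeftAltMul lmul) (hv : IsCliffordFrame v m)
    (G : (Fin (m + 1) → ℝ) → A) (x : Fin (m + 1) → ℝ) :
    Dbarop v m m G x = ∑ s : Fin (m + 1), conjFrame v s * pdF m s G x := by
  simp only [Dbarop, Fin.sum_univ_succ]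
  simp [conjFrame, hv.zero_mul hA, hA.neg_mul, sub_eq_add_neg]

theorem IsLeftAltMul.DopP_eq_sum_lmul (hA : IsLeftAltMul lmul) (w : ℕ → A) :
    DopP w p g = fun y => ∑ s : Fin (p + 1), lmul (w s) (pdP p s g y) := by
  ext y
  simp only [DopP, hA.lmul_apply]

theorem IsLeftAltMul.DopP_sum (hA : IsLeftAltMul lmul) (w : ℕ → A) {ι : Type*} {S : Finset ι}
    {G : ι → (Fin (p + 1) → ℝ) → A} (hG : ∀ i ∈ S, DifferentiableAt ℝ (G i) y) :
    DopP w p (fun z => ∑ i ∈ S, G i z) y = ∑ i ∈ S, DopP w p (G i) y := by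
  simp only [DopP, pdP_sum hG, hA.mul_sum]
  exact Finset.sum_comm

variable [CompleteSpace A]

theorem IsLeftAltMul.pdP_DopP (hA : IsLeftAltMul lmul) (w : ℕ → A) (hg : AnalyticAt ℝ g y)
    (s : Fin (p + 1)) : pdP p s (DopP w p g) =ᶠ[𝓝 y] DopP w p (pdP p s g) := by
  filter_upwards [hg.eventually_analyticAt] with z hz
  have hdiff : ∀ t : Fin (p + 1), DifferentiableAt ℝ (pdP p t g) z :=
    fun t => (analyticAt_pdP hz t).differentiableAt
  have hterm : ∀ t ∈ (Finset.univ : Finset (Fin (p + 1))),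
      DifferentiableAt ℝ (fun u => lmul (w t) (pdP p t g u)) z :=
    fun t _ => (lmul (w t)).differentiableAt.comp z (hdiff t)
  rw [hA.DopP_eq_sum_lmul, hA.DopP_eq_sum_lmul, pdP_sum hterm]
  refine Finset.sum_congr rfl fun t _ => ?_
  rw [pdP_clm_comp _ (hdiff t), (pdP_comm hz s t).eq_of_nhds]

theorem IsLeftAltMul.lapP_DopP (hA : IsLeftAltMul lmul) (w : ℕ → A) (hg : AnalyticAt ℝ g y) :
    lapP p (DopP w p g) y = DopP w p (lapP p g) y := by
  have hpd : ∀ s, pdP p s (pdP p s (DopP w p g)) y = DopP w p (pdP p s (pdP p s g)) y := fun s =>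
    ((pdP_congr s (hA.pdP_DopP w hg s)).trans
      (hA.pdP_DopP w (analyticAt_pdP hg s) s)).eq_of_nhds
  simp only [lapP, hpd]
  exact (hA.DopP_sum w fun s _ =>
    (analyticAt_pdP (analyticAt_pdP hg s) s).differentiableAt).symm

theorem IsLeftAltMul.lapIterP_DopP (hA : IsLeftAltMul lmul) (w : ℕ → A) (hg : AnalyticAt ℝ g y)
    (k : ℕ) : lapIterP p k (DopP w p g) =ᶠ[𝓝 y] DopP w p (lapIterP p k g) := by
  induction k with
  | zero => rfl
  | succ k ih =>
    simp only [lapIterP_succ']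
    refine (lapP_congr ih).trans ?_
    filter_upwards [(analyticAt_lapIterP hg k).eventually_analyticAt] with z hz
    exact hA.lapP_DopP w hz

theorem IsCliffordFrame.DopP_DbaropP (hv : IsCliffordFrame v m) (hA : IsLeftAltMul lmul)
    (hp : p ≤ m) (hg : AnalyticAt ℝ g y) : DopP v p (DbaropP v p g) y = lapP p g y := by
  have hle : ∀ s : Fin (p + 1), (s : ℕ) ≤ m := fun s => by lia
  have hpd : ∀ s, pdP p s (DbaropP v p g) y =
      ∑ t : Fin (p + 1), conjFrame v t * pdP p t (pdP p s g) y := fun s => by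
    rw [DbaropP_eq_DopP_conjFrame hA hv, (hA.pdP_DopP _ hg s).eq_of_nhds]
    rfl
  simp only [DopP, hpd, hA.mul_sum]
  rw [sum_sum_eq_sum_diag_of_antisymm]
  · exact Finset.sum_congr rfl fun s _ => hv.mul_conjFrame_mul hA (hle s) _
  · intro s t hst
    rw [hv.mul_conjFrame_mul_antisymm hA (hle s) (hle t) (Fin.val_ne_of_ne hst),
      (pdP_comm hg s t).eq_of_nhds]

end DiracOperators

section CauchyEstimates

variable {𝕜 E F : Type*} [NontriviallyNormedField 𝕜] [NormedAddCommGroup E] [NormedSpace 𝕜 E]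
  [NormedAddCommGroup F] [NormedSpace 𝕜 F]

theorem exists_nnnorm_changeOrigin_mul_pow_le (P : FormalMultilinearSeries 𝕜 E F) {a : NNReal}
    (ha : 0 < a) (hP : (a + a : ENNReal) < P.radius) :
    ∃ T, ∀ z, ‖z‖₊ ≤ a → ∀ n, ‖P.changeOrigin z n‖₊ * a ^ n ≤ T := by
  have hsum := P.changeOriginSeries_summable_aux₁ hP
  obtain ⟨hsum_n, hsum_tsum⟩ := NNReal.summable_sigma.1 hsum
  refine ⟨_, fun z hz n => le_trans ?_ (hsum_tsum.le_tsum n fun _ _ => zero_le)⟩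
  have hsum_z : Summable fun s : Σ l : ℕ, { s : Finset (Fin (n + l)) // s.card = l } =>
      ‖P (n + s.1)‖₊ * a ^ s.1 := by
    simpa only [mul_inv_cancel_right₀ (pow_pos ha n).ne'] using (hsum_n n).mul_right (a ^ n)⁻¹
  have hle : ∀ s : Σ l : ℕ, { s : Finset (Fin (n + l)) // s.card = l },
      ‖P (n + s.1)‖₊ * ‖z‖₊ ^ s.1 ≤ ‖P (n + s.1)‖₊ * a ^ s.1 := fun s => by gcongr
  have hz' : (‖z‖₊ : ENNReal) < P.radius :=
    lt_of_le_of_lt (by exact_mod_cast hz.trans le_self_add) hP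
  calc ‖P.changeOrigin z n‖₊ * a ^ n
      ≤ (∑' s : Σ l : ℕ, { s : Finset (Fin (n + l)) // s.card = l },
          ‖P (n + s.1)‖₊ * a ^ s.1) * a ^ n := by
        gcongr
        exact (P.nnnorm_changeOrigin_le n hz').trans
          ((NNReal.summable_of_le hle hsum_z).tsum_le_tsum hle hsum_z)
    _ = _ := NNReal.tsum_mul_right _ _ |>.symm

theorem norm_iteratedFDeriv_le_factorial_mul_norm [CompleteSpace F] {f : E → F}
    {P : FormalMultilinearSeries 𝕜 E F} {x : E} {r : ENNReal} (hf : HasFPowerSeriesOnBall f P x r)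
    (n : ℕ) : ‖iteratedFDeriv 𝕜 n f x‖ ≤ n.factorial * ‖P n‖ := by
  refine ContinuousMultilinearMap.opNorm_le_bound (by positivity) fun w => ?_
  have hperm : ∀ σ : Equiv.Perm (Fin n), ‖P n (fun i => w (σ i))‖ ≤ ‖P n‖ * ∏ i, ‖w i‖ := fun σ =>
    ((P n).le_opNorm _).trans_eq (by rw [Equiv.prod_comp σ fun i => ‖w i‖])
  rw [hf.iteratedFDeriv_eq_sum_of_completeSpace w]
  refine (norm_sum_le_of_le _ fun σ _ => hperm σ).trans_eq ?_
  rw [Finset.sum_const, Finset.card_univ, Fintype.card_perm, Fintype.card_fin, nsmul_eq_mul,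
    mul_assoc]

theorem exists_eventually_norm_iteratedFDeriv_le [CompleteSpace F] {f : E → F} {x : E}
    (hf : AnalyticAt 𝕜 f x) :
    ∃ C K : ℝ, 0 ≤ C ∧ 0 < K ∧ ∀ᶠ y in 𝓝 x, ∀ n : ℕ,
      ‖iteratedFDeriv 𝕜 n f y‖ ≤ C * K ^ n * n.factorial := by
  obtain ⟨P, R, hP⟩ := hf
  obtain ⟨ρ, hρ0, hρR⟩ := ENNReal.lt_iff_exists_nnreal_btwn.1 hP.r_pos
  have hρ0' : 0 < ρ := by exact_mod_cast hρ0
  obtain ⟨a, ha, haρ⟩ : ∃ a : NNReal, 0 < a ∧ a + a = ρ := ⟨ρ / 2, by positivity, add_halves ρ⟩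
  have haR : (a + a : ENNReal) < R := by
    rw [← ENNReal.coe_add, haρ]
    exact hρR
  obtain ⟨T, hT⟩ := exists_nnnorm_changeOrigin_mul_pow_le P ha (haR.trans_le hP.r_le)
  refine ⟨T, (a : ℝ)⁻¹, T.2, by positivity, ?_⟩
  filter_upwards [Metric.ball_mem_nhds x (show (0 : ℝ) < a from ha)] with y hy n
  have hya : ‖y - x‖₊ ≤ a := by
    rw [← NNReal.coe_le_coe, coe_nnnorm, ← dist_eq_norm]
    exact (Metric.mem_ball.1 hy).le
  have hyR : (‖y - x‖₊ : ENNReal) < R :=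
    lt_of_le_of_lt (by exact_mod_cast hya.trans le_self_add) haR
  have hfy := hP.changeOrigin hyR
  rw [add_sub_cancel] at hfy
  have hcoeff : ‖P.changeOrigin (y - x) n‖ ≤ T * (a : ℝ)⁻¹ ^ n := by
    rw [inv_pow, ← div_eq_mul_inv, le_div_iff₀ (by positivity)]
    exact_mod_cast hT _ hya n
  calc ‖iteratedFDeriv 𝕜 n f y‖ ≤ n.factorial * ‖P.changeOrigin (y - x) n‖ :=
        norm_iteratedFDeriv_le_factorial_mul_norm hfy n
    _ ≤ n.factorial * (T * (a : ℝ)⁻¹ ^ n) := by gcongr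
    _ = T * (a : ℝ)⁻¹ ^ n * n.factorial := mul_comm _ _

end CauchyEstimates

section LaplacianGrowth

variable {F : Type*} [NormedAddCommGroup F] [NormedSpace ℝ F] {p : ℕ}
  {f : (Fin (p + 1) → ℝ) → F} {y : Fin (p + 1) → ℝ}

/-- Near `y`, the iterated Laplacians of `f` and their differentials grow at most like
`Q ^ k * (2 * k)!`, the growth Cauchy's estimates give for analytic `f`. -/
def HasLapGrowthAt (p : ℕ) (f : (Fin (p + 1) → ℝ) → F) (Q : ℝ) (y : Fin (p + 1) → ℝ) : Prop :=
  ∃ C : ℝ, ∀ᶠ z in 𝓝 y, ∀ k : ℕ,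
    ‖lapIterP p k f z‖ ≤ C * Q ^ k * (2 * k).factorial ∧
      ‖fderiv ℝ (lapIterP p k f) z‖ ≤ C * Q ^ k * (2 * k).factorial

variable [CompleteSpace F]

theorem norm_iteratedFDeriv_pdP_le (hf : AnalyticAt ℝ f y) (s : Fin (p + 1)) (n : ℕ) :
    ‖iteratedFDeriv ℝ n (pdP p s f) y‖ ≤ ‖iteratedFDeriv ℝ (n + 1) f y‖ := by
  rw [← norm_iteratedFDeriv_fderiv]
  refine (norm_iteratedFDeriv_clm_apply_const (c := (Pi.single s (1 : ℝ) : Fin (p + 1) → ℝ))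
    (hf.fderiv.contDiffAt (n := n)) le_rfl).trans_eq ?_
  rw [Pi.norm_single, norm_one, one_mul]

theorem norm_iteratedFDeriv_lapP_le (hf : AnalyticAt ℝ f y) (n : ℕ) :
    ‖iteratedFDeriv ℝ n (lapP p f) y‖ ≤ (p + 1) * ‖iteratedFDeriv ℝ (n + 2) f y‖ := by
  have hterm : ∀ s : Fin (p + 1),
      ‖iteratedFDeriv ℝ n (pdP p s (pdP p s f)) y‖ ≤ ‖iteratedFDeriv ℝ (n + 2) f y‖ := fun s =>
    (norm_iteratedFDeriv_pdP_le (analyticAt_pdP hf s) s n).trans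
      (norm_iteratedFDeriv_pdP_le hf s (n + 1))
  change ‖iteratedFDeriv ℝ n (fun z => ∑ s, pdP p s (pdP p s f) z) y‖ ≤ _
  rw [iteratedFDeriv_fun_sum_apply fun s _ =>
    (analyticAt_pdP (analyticAt_pdP hf s) s).contDiffAt]
  refine (norm_sum_le_of_le _ fun s _ => hterm s).trans_eq ?_
  simp

theorem norm_iteratedFDeriv_lapIterP_le (hf : AnalyticAt ℝ f y) (k n : ℕ) :
    ‖iteratedFDeriv ℝ n (lapIterP p k f) y‖ ≤
      (p + 1) ^ k * ‖iteratedFDeriv ℝ (n + 2 * k) f y‖ := by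
  induction k generalizing n with
  | zero => simp [lapIterP]
  | succ k ih =>
    calc ‖iteratedFDeriv ℝ n (lapIterP p (k + 1) f) y‖
        ≤ (p + 1) * ‖iteratedFDeriv ℝ (n + 2) (lapIterP p k f) y‖ := by
          rw [lapIterP_succ']
          exact norm_iteratedFDeriv_lapP_le (analyticAt_lapIterP hf k) n
      _ ≤ (p + 1) * ((p + 1) ^ k * ‖iteratedFDeriv ℝ (n + 2 + 2 * k) f y‖) := by
          gcongr
          exact ih (n + 2)
      _ = (p + 1) ^ (k + 1) * ‖iteratedFDeriv ℝ (n + 2 * (k + 1)) f y‖ := by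
          rw [pow_succ', mul_assoc, show n + 2 + 2 * k = n + 2 * (k + 1) by ring]

theorem factorial_add_two_mul_le {n : ℕ} (hn : n ≤ 1) (k : ℕ) :
    (n + 2 * k).factorial ≤ 4 ^ k * (2 * k).factorial := by
  have hpow : 2 * k + 1 ≤ 4 ^ k := by
    induction k with
    | zero => rfl
    | succ k ih => rw [pow_succ]; lia
  calc (n + 2 * k).factorial ≤ (2 * k + 1).factorial := Nat.factorial_le (by lia)
    _ ≤ 4 ^ k * (2 * k).factorial := Nat.mul_le_mul_right _ hpow

theorem exists_hasLapGrowthAt (hf : AnalyticAt ℝ f y) : ∃ Q > 0, HasLapGrowthAt p f Q y := by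
  obtain ⟨C, K, hC, hK, hbound⟩ := exists_eventually_norm_iteratedFDeriv_le hf
  refine ⟨4 * (p + 1) * K ^ 2, by positivity, C * (1 + K), ?_⟩
  filter_upwards [hbound, hf.eventually_analyticAt] with z hz hfz k
  have hle : ∀ n ≤ 1, ‖iteratedFDeriv ℝ n (lapIterP p k f) z‖ ≤
      C * (1 + K) * (4 * (p + 1) * K ^ 2) ^ k * (2 * k).factorial := by
    intro n hn
    have hKn : K ^ n ≤ 1 + K := by interval_cases n <;> linarith
    have hfac : ((n + 2 * k).factorial : ℝ) ≤ 4 ^ k * (2 * k).factorial := by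
      exact_mod_cast factorial_add_two_mul_le hn k
    calc ‖iteratedFDeriv ℝ n (lapIterP p k f) z‖
        ≤ (p + 1) ^ k * (C * K ^ (n + 2 * k) * (n + 2 * k).factorial) := by
          grw [norm_iteratedFDeriv_lapIterP_le hfz k n, hz]
      _ ≤ (p + 1) ^ k * (C * ((1 + K) * (K ^ 2) ^ k) * (4 ^ k * (2 * k).factorial)) := by
          rw [pow_add, pow_mul]
          gcongr
      _ = C * (1 + K) * (4 * (p + 1) * K ^ 2) ^ k * (2 * k).factorial := by
          simp only [mul_pow]
          ring
  exact ⟨by simpa only [norm_iteratedFDeriv_zero] using hle 0 zero_le_one,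
    by simpa only [norm_iteratedFDeriv_one] using hle 1 le_rfl⟩

end LaplacianGrowth

section PowerSeries

variable {E F : Type*} [NormedAddCommGroup E] [NormedSpace ℝ E]
  [NormedAddCommGroup F] [NormedSpace ℝ F]

/-- The differential at `(y, ρ)` of `(u, σ) ↦ σ ^ k • b u`, where `b y = a` and `b` has differential
`a'` at `y`. -/
noncomputable def powSMulFDeriv (k : ℕ) (a : F) (a' : E →L[ℝ] F) (ρ : ℝ) : E × ℝ →L[ℝ] F :=
  ρ ^ k • a' ∘L ContinuousLinearMap.fst ℝ E ℝ +
    (k * ρ ^ (k - 1)) • (ContinuousLinearMap.snd ℝ E ℝ).smulRight a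

theorem hasFDerivAt_pow_smul (k : ℕ) {a : E → F} {z : E × ℝ} (ha : DifferentiableAt ℝ a z.1) :
    HasFDerivAt (fun w : E × ℝ => w.2 ^ k • a w.1)
      (powSMulFDeriv k (a z.1) (fderiv ℝ a z.1) z.2) z := by
  have hpow := (hasFDerivAt_snd (𝕜 := ℝ) (p := z)).pow k
  refine (hpow.smul (ha.hasFDerivAt.comp z hasFDerivAt_fst)).congr_fderiv ?_
  ext w <;> simp [powSMulFDeriv]

theorem norm_powSMulFDeriv_le {k : ℕ} {a : F} {a' : E →L[ℝ] F} {ρ R B : ℝ} (hρ : |ρ| ≤ R)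
    (ha : ‖a‖ ≤ B) (ha' : ‖a'‖ ≤ B) :
    ‖powSMulFDeriv k a a' ρ‖ ≤ R ^ k * B + k * R ^ (k - 1) * B := by
  have hR : 0 ≤ R := (abs_nonneg ρ).trans hρ
  have hfst : ‖a' ∘L ContinuousLinearMap.fst ℝ E ℝ‖ ≤ B :=
    (ContinuousLinearMap.opNorm_comp_le _ _).trans <|
      (mul_le_of_le_one_right (norm_nonneg _) (ContinuousLinearMap.norm_fst_le ..)).trans ha'
  have hsnd : ‖(ContinuousLinearMap.snd ℝ E ℝ).smulRight a‖ ≤ B := by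
    rw [ContinuousLinearMap.norm_smulRight_apply]
    exact (mul_le_of_le_one_left (norm_nonneg _) (ContinuousLinearMap.norm_snd_le ..)).trans ha
  refine norm_add_le_of_le ?_ ?_
  · rw [norm_smul, norm_pow, Real.norm_eq_abs]
    gcongr
  · rw [norm_smul, norm_mul, norm_pow, Real.norm_eq_abs, Real.norm_eq_abs, Nat.abs_cast]
    gcongr

theorem summable_pow_add_mul_pow_pred {R Q : ℝ} (hR : 0 < R) (hQ : 0 ≤ Q) (hRQ : Q * R < 1)
    (C : ℝ) : Summable fun k : ℕ => R ^ k * (C * Q ^ k) + k * R ^ (k - 1) * (C * Q ^ k) := by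
  have hnorm : ‖Q * R‖ < 1 := by rwa [Real.norm_of_nonneg (by positivity)]
  have hgeom : Summable fun k : ℕ => (Q * R) ^ k := summable_geometric_of_norm_lt_one hnorm
  have hderiv : Summable fun k : ℕ => (k : ℝ) ^ 1 * (Q * R) ^ k :=
    summable_pow_mul_geometric_of_norm_lt_one 1 hnorm
  refine ((hgeom.mul_left C).add (hderiv.mul_left (C / R))).congr fun k => ?_
  rcases k with _ | k
  · simp
  · simp only [add_tsub_cancel_right]
    field_simp
    ring

theorem summable_pow_smul [CompleteSpace F] {a : ℕ → F} {ρ C Q : ℝ} (hQ : 0 ≤ Q)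
    (hρ : Q * |ρ| < 1) (ha : ∀ k, ‖a k‖ ≤ C * Q ^ k) : Summable fun k => ρ ^ k • a k := by
  refine .of_norm_bounded
    (summable_geometric_of_lt_one (by positivity) hρ |>.mul_left C) fun k => ?_
  rw [norm_smul, norm_pow, Real.norm_eq_abs, mul_pow, ← mul_assoc, mul_comm]
  gcongr
  exact ha k

theorem exists_hasFDerivAt_tsum_pow_smul [CompleteSpace F] {a : ℕ → E → F} {y : E} {ρ C Q : ℝ}
    (hQ : 0 < Q) (hρ : Q * |ρ| < 1)
    (ha : ∀ᶠ z in 𝓝 y, ∀ k, DifferentiableAt ℝ (a k) z ∧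
      ‖a k z‖ ≤ C * Q ^ k ∧ ‖fderiv ℝ (a k) z‖ ≤ C * Q ^ k) :
    ∃ Φ', HasSum (fun k => powSMulFDeriv k (a k y) (fderiv ℝ (a k) y) ρ) Φ' ∧
      HasFDerivAt (fun z : E × ℝ => ∑' k, z.2 ^ k • a k z.1) Φ' (y, ρ) := by
  obtain ⟨ε, hε, hball⟩ := Metric.eventually_nhds_iff_ball.1 ha
  obtain ⟨R, hρR, hRQ⟩ : ∃ R, |ρ| < R ∧ R < Q⁻¹ := exists_between (by
    rwa [← one_div, lt_div_iff₀' hQ])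
  have hQR : Q * R < 1 := by rwa [← one_div, lt_div_iff₀' hQ] at hRQ
  set s : Set (E × ℝ) := Metric.ball y ε ×ˢ Metric.ball 0 R
  have hs : (y, ρ) ∈ s := ⟨Metric.mem_ball_self hε, mem_ball_zero_iff.2 hρR⟩
  have habs : ∀ z ∈ s, |z.2| ≤ R := fun z hz => (mem_ball_zero_iff.1 hz.2).le
  have hbound := summable_pow_add_mul_pow_pred ((abs_nonneg ρ).trans_lt hρR) hQ.le hQR C
  have hderiv_le : ∀ k, ∀ z ∈ s,
      ‖powSMulFDeriv k (a k z.1) (fderiv ℝ (a k) z.1) z.2‖ ≤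
        R ^ k * (C * Q ^ k) + k * R ^ (k - 1) * (C * Q ^ k) := fun k z hz =>
    norm_powSMulFDeriv_le (habs z hz) (hball z.1 hz.1 k).2.1 (hball z.1 hz.1 k).2.2
  have hval := summable_pow_smul hQ.le hρ fun k => (hball y hs.1 k).2.1
  exact ⟨_, (Summable.of_norm_bounded hbound fun k => hderiv_le k _ hs).hasSum,
    hasFDerivAt_tsum_of_isPreconnected hbound (Metric.isOpen_ball.prod Metric.isOpen_ball)
      ((convex_ball y ε).prod (convex_ball 0 R)).isPreconnected
      (fun k z hz => hasFDerivAt_pow_smul k (hball z.1 hz.1 k).1) hderiv_le hs hval hs⟩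

end PowerSeries

section LaplacianSeries

variable {F : Type*} [NormedAddCommGroup F] [NormedSpace ℝ F] {p : ℕ}
  {f g : (Fin (p + 1) → ℝ) → F} {c : ℕ → ℝ} {z : (Fin (p + 1) → ℝ) × ℝ}

/-- The power series `Σ c_k ρ ^ k Δ ^ k f (y)` in the variables `z = (y, ρ)`; the generalized
CK-extensions are such series evaluated at `ρ = |x_q|²`. -/
noncomputable def lapSeries (p : ℕ) (c : ℕ → ℝ) (f : (Fin (p + 1) → ℝ) → F)
    (z : (Fin (p + 1) → ℝ) × ℝ) : F :=
  ∑' k, z.2 ^ k • (c k • lapIterP p k f z.1)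

/-- `f` is analytic at `z.1` and its Laplacian series with coefficients `O(1 / (2 * k)!)` are
dominated by a geometric series at `z`. -/
def LapConvergentAt (p : ℕ) (f : (Fin (p + 1) → ℝ) → F) (z : (Fin (p + 1) → ℝ) × ℝ) : Prop :=
  AnalyticAt ℝ f z.1 ∧ ∃ Q > 0, HasLapGrowthAt p f Q z.1 ∧ Q * |z.2| < 1

theorem lapSeries_congr (c : ℕ → ℝ) (hfg : f =ᶠ[𝓝 z.1] g) :
    lapSeries p c f z = lapSeries p c g z :=
  tsum_congr fun k => by rw [(lapIterP_congr k hfg).eq_of_nhds]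

theorem lapSeries_const_mul (r : ℝ) (c : ℕ → ℝ) (f : (Fin (p + 1) → ℝ) → F)
    (z : (Fin (p + 1) → ℝ) × ℝ) :
    lapSeries p (fun k => r * c k) f z = r • lapSeries p c f z := by
  rw [lapSeries, lapSeries, ← tsum_const_smul'']
  exact tsum_congr fun k => by rw [mul_smul, smul_comm]

theorem HasLapGrowthAt.exists_eventually_smul_le [CompleteSpace F] {Q : ℝ}
    {y : Fin (p + 1) → ℝ} (hgrowth : HasLapGrowthAt p f Q y) (hQ : 0 < Q)
    (hf : AnalyticAt ℝ f y) (hc : ∀ k, |c k| ≤ ((2 * k).factorial : ℝ)⁻¹) :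
    ∃ C, ∀ᶠ u in 𝓝 y, ∀ k, DifferentiableAt ℝ (c k • lapIterP p k f) u ∧
      ‖(c k • lapIterP p k f) u‖ ≤ C * Q ^ k ∧
      ‖fderiv ℝ (c k • lapIterP p k f) u‖ ≤ C * Q ^ k := by
  obtain ⟨C, hC⟩ := hgrowth
  have hscale : ∀ k, ∀ b ≥ 0, b ≤ C * Q ^ k * (2 * k).factorial → |c k| * b ≤ C * Q ^ k :=
    fun k b hb0 hb => (mul_le_mul (hc k) hb hb0 (by positivity)).trans_eq (by field_simp)
  refine ⟨C, ?_⟩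
  filter_upwards [hC, hf.eventually_analyticAt] with u hu hfu k
  have hdiff := (analyticAt_lapIterP hfu k).differentiableAt
  refine ⟨hdiff.const_smul (c k), ?_, ?_⟩
  · rw [Pi.smul_apply, norm_smul, Real.norm_eq_abs]
    exact hscale k _ (norm_nonneg _) (hu k).1
  · rw [fderiv_const_smul hdiff, norm_smul, Real.norm_eq_abs]
    exact hscale k _ (norm_nonneg _) (hu k).2

theorem LapConvergentAt.hasSum [CompleteSpace F] (hz : LapConvergentAt p f z)
    (hc : ∀ k, |c k| ≤ ((2 * k).factorial : ℝ)⁻¹) :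
    HasSum (fun k => z.2 ^ k • (c k • lapIterP p k f z.1)) (lapSeries p c f z) := by
  obtain ⟨hf, Q, hQ, hgrowth, hρ⟩ := hz
  obtain ⟨C, hC⟩ := hgrowth.exists_eventually_smul_le hQ hf hc
  exact (summable_pow_smul hQ.le hρ fun k => (hC.self_of_nhds k).2.1).hasSum

theorem LapConvergentAt.exists_hasFDerivAt [CompleteSpace F] (hz : LapConvergentAt p f z)
    (hc : ∀ k, |c k| ≤ ((2 * k).factorial : ℝ)⁻¹) :
    ∃ Φ', HasSum (fun k => powSMulFDeriv k (c k • lapIterP p k f z.1)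
        (c k • fderiv ℝ (lapIterP p k f) z.1) z.2) Φ' ∧
      HasFDerivAt (lapSeries p c f) Φ' z := by
  obtain ⟨hf, Q, hQ, hgrowth, hρ⟩ := hz
  obtain ⟨C, hC⟩ := hgrowth.exists_eventually_smul_le hQ hf hc
  simp only [← fderiv_const_smul (analyticAt_lapIterP hf _).differentiableAt]
  exact exists_hasFDerivAt_tsum_pow_smul hQ hρ hC

theorem LapConvergentAt.differentiableAt [CompleteSpace F] (hz : LapConvergentAt p f z)
    (hc : ∀ k, |c k| ≤ ((2 * k).factorial : ℝ)⁻¹) : DifferentiableAt ℝ (lapSeries p c f) z :=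
  let ⟨_, _, hderiv⟩ := hz.exists_hasFDerivAt hc
  hderiv.differentiableAt

theorem LapConvergentAt.hasSum_pdSx [CompleteSpace F] (hz : LapConvergentAt p f z)
    (hc : ∀ k, |c k| ≤ ((2 * k).factorial : ℝ)⁻¹) (s : Fin (p + 1)) :
    HasSum (fun k => z.2 ^ k • (c k • pdP p s (lapIterP p k f) z.1))
      (pdSx p s (lapSeries p c f) z) := by
  obtain ⟨Φ', hsum, hderiv⟩ := hz.exists_hasFDerivAt hc
  simpa [powSMulFDeriv, pdSx, pdP, hderiv.fderiv] using
    (ContinuousLinearMap.apply ℝ F ((Pi.single s 1, 0) : (Fin (p + 1) → ℝ) × ℝ)).hasSum hsum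

theorem LapConvergentAt.hasSum_pdSr [CompleteSpace F] (hz : LapConvergentAt p f z)
    (hc : ∀ k, |c k| ≤ ((2 * k).factorial : ℝ)⁻¹) :
    HasSum (fun k : ℕ => (k * z.2 ^ (k - 1)) • (c k • lapIterP p k f z.1))
      (pdSr p (lapSeries p c f) z) := by
  obtain ⟨Φ', hsum, hderiv⟩ := hz.exists_hasFDerivAt hc
  simpa [powSMulFDeriv, pdSr, hderiv.fderiv] using
    (ContinuousLinearMap.apply ℝ F ((0, 1) : (Fin (p + 1) → ℝ) × ℝ)).hasSum hsum

theorem LapConvergentAt.pdSr_lapSeries [CompleteSpace F] (hz : LapConvergentAt p f z)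
    (hc : ∀ k, |c k| ≤ ((2 * k).factorial : ℝ)⁻¹) :
    pdSr p (lapSeries p c f) z =
      lapSeries p (fun k => (k + 1) * c (k + 1)) (lapP p f) z := by
  rw [← (hz.hasSum_pdSr hc).tsum_eq, (hz.hasSum_pdSr hc).summable.tsum_eq_zero_add]
  simp only [Nat.cast_zero, zero_mul, zero_smul, zero_add, lapSeries]
  refine tsum_congr fun k => ?_
  rw [← lapIterP_succ, smul_smul, smul_smul]
  congr 1
  push_cast
  ring

theorem LapConvergentAt.smul_lapSeries_add_two_mul_smul_pdSr [CompleteSpace F]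
    (hz : LapConvergentAt p f z) (hc : ∀ k, |c k| ≤ ((2 * k).factorial : ℝ)⁻¹) (r : ℝ) :
    r • lapSeries p c f z + (2 * z.2) • pdSr p (lapSeries p c f) z =
      lapSeries p (fun k => (r + 2 * k) * c k) f z := by
  refine (((hz.hasSum hc).const_smul r).add
    ((hz.hasSum_pdSr hc).const_smul (2 * z.2))).tsum_eq.symm.trans (tsum_congr fun k => ?_)
  rcases k with _ | k
  · simp [smul_smul]
  · rw [Nat.add_sub_cancel, smul_smul, smul_smul, smul_smul, smul_smul, ← add_smul, smul_smul]
    congr 1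
    ring

end LaplacianSeries

theorem IsLeftAltMul.DopSx_lapSeries [CompleteSpace A] {lmul : A →ₗ[ℝ] A →L[ℝ] A}
    (hA : IsLeftAltMul lmul) (w : ℕ → A) {p : ℕ} {f : (Fin (p + 1) → ℝ) → A} {c : ℕ → ℝ}
    {z : (Fin (p + 1) → ℝ) × ℝ} (hz : LapConvergentAt p f z)
    (hc : ∀ k, |c k| ≤ ((2 * k).factorial : ℝ)⁻¹) :
    DopSx w p (lapSeries p c f) z = lapSeries p c (DopP w p f) z := by
  have hsum : HasSum (fun k => ∑ s : Fin (p + 1),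
      lmul (w s) (z.2 ^ k • (c k • pdP p s (lapIterP p k f) z.1)))
      (∑ s : Fin (p + 1), lmul (w s) (pdSx p s (lapSeries p c f) z)) :=
    hasSum_sum fun s _ => (lmul (w s)).hasSum (hz.hasSum_pdSx hc s)
  simp only [hA.lmul_apply, hA.mul_smul, ← Finset.smul_sum] at hsum
  refine hsum.tsum_eq.symm.trans (tsum_congr fun k => ?_)
  rw [(hA.lapIterP_DopP w hz.1 k).eq_of_nhds]
  rfl

section RadialCoordinates

variable {m p : ℕ}

/-- The coordinates `(x_p, |x_q|²)`, in which the CK-extensions are power series. Unlike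
`(x_p, |x_q|)` they depend smoothly on `x`. -/
noncomputable def sqCoords (m p : ℕ) (x : Fin (m + 1) → ℝ) : (Fin (p + 1) → ℝ) × ℝ :=
  (projP m p x, rad m p x ^ 2)

theorem projP_apply (hp : p ≤ m) (x : Fin (m + 1) → ℝ) (s : Fin (p + 1)) :
    projP m p x s = x (s.castLE (by lia)) :=
  dif_pos (by lia)

theorem rad_sq (x : Fin (m + 1) → ℝ) : rad m p x ^ 2 = ∑ s, xqpart m p x s ^ 2 :=
  Real.sq_sqrt (Finset.sum_nonneg fun _ _ => sq_nonneg _)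

theorem sum_univ_eq_sum_castLE_add {M : Type*} [AddCommMonoid M] (hp : p ≤ m)
    (g : Fin (m + 1) → M) :
    ∑ s, g s = ∑ s : Fin (p + 1), g (s.castLE (by lia)) +
      ∑ s : Fin (m + 1), if p < (s : ℕ) then g s else 0 := by
  rw [← Finset.sum_filter_not_add_sum_filter Finset.univ fun s : Fin (m + 1) => p < (s : ℕ),
    ← Finset.sum_filter]
  congr 1
  refine (Finset.sum_bij (fun s _ => Fin.castLE (Nat.succ_le_succ hp) s) ?_ ?_ ?_
    fun _ _ => rfl).symm
  · intro s _
    simpa using Nat.lt_succ_iff.1 s.2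
  · intro s _ t _ hst
    exact Fin.castLE_injective _ hst
  · intro s hs
    exact ⟨⟨s, by simpa [Nat.lt_succ_iff] using hs⟩, Finset.mem_univ _, rfl⟩

theorem sum_ite_lt_const {M : Type*} [AddCommMonoid M] (hp : p ≤ m) (a : M) :
    ∑ s : Fin (m + 1), (if p < (s : ℕ) then a else 0) = (m - p) • a := by
  have hcount := sum_univ_eq_sum_castLE_add hp fun _ => 1
  simp only [Finset.sum_const, Finset.card_univ, Fintype.card_fin, smul_eq_mul, mul_one,
    Finset.sum_boole, Nat.cast_id] at hcount
  rw [← Finset.sum_filter, Finset.sum_const]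
  congr 1
  lia

theorem hasFDerivAt_xqpart_sq (s : Fin (m + 1)) (x : Fin (m + 1) → ℝ) :
    HasFDerivAt (fun u => xqpart m p u s ^ 2)
      ((2 * xqpart m p x s) • ContinuousLinearMap.proj (R := ℝ) (φ := fun _ => ℝ) s) x := by
  by_cases hs : (s : ℕ) ≤ p
  · simpa [xqpart, hs] using hasFDerivAt_const (0 : ℝ) x
  · simpa [xqpart, hs] using (hasFDerivAt_apply (𝕜 := ℝ) s x).pow 2

theorem hasFDerivAt_sqCoords (hp : p ≤ m) (x : Fin (m + 1) → ℝ) :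
    HasFDerivAt (sqCoords m p)
      ((ContinuousLinearMap.pi fun s : Fin (p + 1) =>
          ContinuousLinearMap.proj (R := ℝ) (φ := fun _ => ℝ) (s.castLE (by lia))).prod
        (∑ s, (2 * xqpart m p x s) • ContinuousLinearMap.proj (R := ℝ) (φ := fun _ => ℝ) s)) x := by
  refine HasFDerivAt.prodMk (hasFDerivAt_pi.2 fun s => ?_) ?_
  · simpa only [projP_apply hp] using hasFDerivAt_apply (𝕜 := ℝ) _ x
  · simpa only [rad_sq] using HasFDerivAt.fun_sum fun s _ => hasFDerivAt_xqpart_sq s x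

variable {F : Type*} [NormedAddCommGroup F] [NormedSpace ℝ F] {Φ : (Fin (p + 1) → ℝ) × ℝ → F}
  {x : Fin (m + 1) → ℝ}

theorem differentiableAt_comp_sqCoords (hp : p ≤ m)
    (hΦ : DifferentiableAt ℝ Φ (sqCoords m p x)) :
    DifferentiableAt ℝ (fun u => Φ (sqCoords m p u)) x :=
  hΦ.comp x (hasFDerivAt_sqCoords hp x).differentiableAt

theorem pdF_comp_sqCoords (hp : p ≤ m) (hΦ : DifferentiableAt ℝ Φ (sqCoords m p x))
    (s : Fin (m + 1)) :
    pdF m s (fun u => Φ (sqCoords m p u)) x =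
      fderiv ℝ Φ (sqCoords m p x) (projP m p (Pi.single s 1), 2 * xqpart m p x s) := by
  rw [pdF]
  refine (congrArg (· (Pi.single s 1))
    (hΦ.hasFDerivAt.comp x (hasFDerivAt_sqCoords hp x)).fderiv).trans ?_
  rw [ContinuousLinearMap.comp_apply, ContinuousLinearMap.prod_apply]
  congr 2
  · ext t
    simp [projP_apply hp]
  · simp [Pi.single_apply]

theorem pdF_comp_sqCoords_castLE (hp : p ≤ m) (hΦ : DifferentiableAt ℝ Φ (sqCoords m p x))
    (s : Fin (p + 1)) :
    pdF m (s.castLE (by lia)) (fun u => Φ (sqCoords m p u)) x =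
      pdSx p s Φ (sqCoords m p x) := by
  have hproj : projP m p (Pi.single (s.castLE (by lia)) 1) = Pi.single s 1 := by
    ext t
    simp [projP_apply hp, Pi.single_apply, Fin.ext_iff]
  have hxq : xqpart m p x (s.castLE (by lia)) = 0 := if_pos (Nat.lt_succ_iff.1 s.2)
  rw [pdF_comp_sqCoords hp hΦ, hproj, hxq, mul_zero, pdSx]

theorem pdF_comp_sqCoords_of_lt (hp : p ≤ m) (hΦ : DifferentiableAt ℝ Φ (sqCoords m p x))
    {s : Fin (m + 1)} (hs : p < (s : ℕ)) :
    pdF m s (fun u => Φ (sqCoords m p u)) x = (2 * x s) • pdSr p Φ (sqCoords m p x) := by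
  have hproj : projP m p (Pi.single s 1) = 0 := by
    ext t
    rw [projP_apply hp, Pi.single_eq_of_ne (Fin.ne_of_val_ne (by simp; lia)), Pi.zero_apply]
  have hxq : xqpart m p x s = x s := if_neg hs.not_ge
  rw [pdF_comp_sqCoords hp hΦ, hproj, hxq, pdSr, ← map_smul, Prod.smul_mk, smul_zero,
    smul_eq_mul, mul_one]

end RadialCoordinates

section RadialDirac

variable {lmul : A →ₗ[ℝ] A →L[ℝ] A} {v : ℕ → A} {m p : ℕ} {x : Fin (m + 1) → ℝ}

theorem IsLeftAltMul.emb_xqpart_mul (hA : IsLeftAltMul lmul) (x : Fin (m + 1) → ℝ) (a : A) :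
    emb v m (xqpart m p x) * a =
      ∑ s : Fin (m + 1), if p < (s : ℕ) then x s • (v s * a) else 0 := by
  simp only [hA.emb_mul, xqpart, ite_smul, zero_smul, ← not_le, ite_not]

theorem IsLeftAltMul.pdF_emb_xqpart_mul (hA : IsLeftAltMul lmul) {G : (Fin (m + 1) → ℝ) → A}
    (hG : DifferentiableAt ℝ G x) (s : Fin (m + 1)) :
    pdF m s (fun u => emb v m (xqpart m p u) * G u) x =
      (if p < (s : ℕ) then v s * G x else 0) + emb v m (xqpart m p x) * pdF m s G x := by
  obtain ⟨L, hL⟩ : ∃ L : (Fin (m + 1) → ℝ) →L[ℝ] A →L[ℝ] A,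
      ∀ u a, L u a = emb v m (xqpart m p u) * a := by
    refine ⟨∑ t : Fin (m + 1), if p < (t : ℕ) then
      (ContinuousLinearMap.proj t).smulRight (lmul (v t)) else 0, fun u a => ?_⟩
    rw [hA.emb_xqpart_mul, sum_apply, sum_apply]
    refine Finset.sum_congr rfl fun t _ => ?_
    split_ifs <;> simp [hA.lmul_apply]
  have hsingle : L (Pi.single s 1) (G x) = if p < (s : ℕ) then v s * G x else 0 := by
    rw [hL, hA.emb_xqpart_mul, Finset.sum_eq_single s (by simp +contextual) (by simp),
      Pi.single_eq_same, one_smul]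
  simp only [← hL, ← hsingle, pdF, (L.hasFDerivAt.clm_apply hG.hasFDerivAt).fderiv]
  simp [add_comm]

variable {Φ : (Fin (p + 1) → ℝ) × ℝ → A}

theorem IsCliffordFrame.Dbarop_comp_sqCoords (hv : IsCliffordFrame v m) (hA : IsLeftAltMul lmul)
    (hp : p ≤ m) (hΦ : DifferentiableAt ℝ Φ (sqCoords m p x)) :
    Dbarop v m m (fun u => Φ (sqCoords m p u)) x =
      DopSx (conjFrame v) p Φ (sqCoords m p x) -
        emb v m (xqpart m p x) * (2 : ℝ) • pdSr p Φ (sqCoords m p x) := by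
  rw [Dbarop_eq_sum_conjFrame hA hv, sum_univ_eq_sum_castLE_add hp, sub_eq_add_neg,
    hA.emb_xqpart_mul, ← Finset.sum_neg_distrib]
  congr 1
  · exact Finset.sum_congr rfl fun s _ => by rw [pdF_comp_sqCoords_castLE hp hΦ, Fin.val_castLE]
  · refine Finset.sum_congr rfl fun s _ => ?_
    split_ifs with hs
    · rw [pdF_comp_sqCoords_of_lt hp hΦ hs, conjFrame, if_neg (by lia), hA.neg_mul, hA.mul_smul,
        hA.mul_smul, smul_smul, mul_comm]
    · rw [neg_zero]

theorem IsCliffordFrame.sum_conjFrame_mul_ite (hv : IsCliffordFrame v m)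
    (hA : IsLeftAltMul lmul) (hp : p ≤ m) (a : A) :
    ∑ s : Fin (m + 1), conjFrame v s * (if p < (s : ℕ) then v s * a else 0) =
      ((m - p : ℕ) : ℝ) • a := by
  rw [Nat.cast_smul_eq_nsmul, ← sum_ite_lt_const hp]
  refine Finset.sum_congr rfl fun s _ => ?_
  split_ifs
  · exact hv.conjFrame_mul_mul hA (Nat.lt_succ_iff.1 s.2) a
  · rw [← hA.lmul_apply, map_zero]

theorem IsCliffordFrame.sum_conjFrame_mul_emb_xqpart_mul_smul (hv : IsCliffordFrame v m)
    (hA : IsLeftAltMul lmul) (x : Fin (m + 1) → ℝ) (a : A) :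
    (∑ s : Fin (m + 1), if p < (s : ℕ) then
      conjFrame v s * (emb v m (xqpart m p x) * (2 * x s) • a) else 0) =
      (2 * (sqCoords m p x).2) • a := by
  calc _ = ∑ s : Fin (m + 1), (-2 : ℝ) •
          (if p < (s : ℕ) then x s • (v s * (emb v m (xqpart m p x) * a)) else 0) := by
        refine Finset.sum_congr rfl fun s _ => ?_
        split_ifs with hs
        · rw [conjFrame, if_neg (by lia), hA.neg_mul, hA.mul_smul, hA.mul_smul, smul_smul,
            neg_mul, neg_smul]
        · rw [smul_zero]
    _ = (-2 : ℝ) • (emb v m (xqpart m p x) * (emb v m (xqpart m p x) * a)) := by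
        rw [← Finset.smul_sum, ← hA.emb_xqpart_mul]
    _ = (2 * (sqCoords m p x).2) • a := by
        rw [hv.emb_mul_emb_mul hA (if_pos (Nat.zero_le p)), ← rad_sq, smul_neg, neg_smul, neg_neg,
          smul_smul, sqCoords]

theorem IsCliffordFrame.Dbarop_emb_xqpart_mul_comp_sqCoords (hv : IsCliffordFrame v m)
    (hA : IsLeftAltMul lmul) (hp : p ≤ m) (hΦ : DifferentiableAt ℝ Φ (sqCoords m p x)) :
    Dbarop v m m (fun u => emb v m (xqpart m p u) * Φ (sqCoords m p u)) x =
      ((m - p : ℕ) : ℝ) • Φ (sqCoords m p x) +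
        emb v m (xqpart m p x) * DopSx v p Φ (sqCoords m p x) +
        (2 * (sqCoords m p x).2) • pdSr p Φ (sqCoords m p x) := by
  have hxq : ∀ t : Fin (m + 1), (t : ℕ) ≤ p → xqpart m p x t = 0 := fun t ht => if_pos ht
  have hsplit : ∀ a b c : A, a * (b + c) = a * b + a * c := fun a b c => by
    simp only [← hA.lmul_apply, map_add]
  have hflat : ∑ s : Fin (p + 1), conjFrame v s *
      (emb v m (xqpart m p x) * pdSx p s Φ (sqCoords m p x)) =
      emb v m (xqpart m p x) * DopSx v p Φ (sqCoords m p x) := by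
    rw [DopSx, hA.mul_sum]
    exact Finset.sum_congr rfl fun s _ =>
      hv.conjFrame_mul_emb_mul hA hp (Nat.lt_succ_iff.1 s.2) hxq _
  have hradial : (∑ s : Fin (m + 1), if p < (s : ℕ) then conjFrame v s *
      (emb v m (xqpart m p x) * pdF m s (fun u => Φ (sqCoords m p u)) x) else 0) =
      (2 * (sqCoords m p x).2) • pdSr p Φ (sqCoords m p x) := by
    rw [← hv.sum_conjFrame_mul_emb_xqpart_mul_smul hA]
    refine Finset.sum_congr rfl fun s _ => ?_
    split_ifs with hs
    · rw [pdF_comp_sqCoords_of_lt hp hΦ hs]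
    · rfl
  simp only [Dbarop_eq_sum_conjFrame hA hv,
    hA.pdF_emb_xqpart_mul (differentiableAt_comp_sqCoords hp hΦ), hsplit, Finset.sum_add_distrib,
    hv.sum_conjFrame_mul_ite hA hp]
  rw [sum_univ_eq_sum_castLE_add hp fun s => conjFrame v s * (emb v m (xqpart m p x) * _),
    hradial, ← hflat, add_assoc]
  simp only [pdF_comp_sqCoords_castLE hp hΦ, Fin.val_castLE]

end RadialDirac

section Coefficients

variable {q : ℕ}

theorem hgckC_eq_pow_mul (q k : ℕ) (r : ℝ) : hgckC q k r = (r ^ 2) ^ k * hgckC q k 1 := by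
  rw [hgckC, hgckC, ← pow_mul, one_pow]
  ring

theorem hgckC'_eq_pow_mul (q k : ℕ) (r : ℝ) : hgckC' q k r = (r ^ 2) ^ k * hgckC' q k 1 := by
  rw [hgckC', hgckC', ← pow_mul, one_pow]
  ring

theorem gckC'_eq_pow_mul (q k : ℕ) (r : ℝ) : gckC' q k r = (r ^ 2) ^ k * gckC' q k 1 := by
  rw [gckC', gckC', ← pow_mul, one_pow]
  ring

theorem hgckC_zero_one (hq : 0 < q) : hgckC q 0 1 = 1 := by
  have hΓ : Real.Gamma ((q : ℝ) / 2) ≠ 0 := (Real.Gamma_pos_of_pos (by positivity)).ne'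
  simp [hgckC, hΓ]

theorem neg_two_mul_succ_mul_hgckC_succ (q k : ℕ) :
    -2 * ((k + 1) * hgckC q (k + 1) 1) = gckC' q k 1 := by
  have hk : ((k + 1 : ℕ) : ℝ) + (q : ℝ) / 2 = k + (q : ℝ) / 2 + 1 := by
    push_cast
    ring
  rw [hgckC, gckC', hk, Nat.factorial_succ, Nat.cast_mul, one_pow, one_pow]
  push_cast
  field_simp
  ring

theorem hgckC'_eq_mul_gckC' (hq : 0 < q) (k : ℕ) (r : ℝ) :
    hgckC' q k r = q * gckC' q k r := by
  rw [hgckC', gckC', Real.Gamma_add_one (by positivity)]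
  field_simp
  ring

theorem add_two_mul_mul_hgckC' (hq : 0 < q) (k : ℕ) (r : ℝ) :
    (q + 2 * k) * hgckC' q k r = q * hgckC q k r := by
  rw [hgckC', hgckC, Real.Gamma_add_one (by positivity), Real.Gamma_add_one (by positivity)]
  field_simp
  ring

theorem add_two_mul_mul_hgckC_succ (hq : 0 < q) (k : ℕ) :
    (q + 2 * k) * (2 * (k + 1)) * hgckC q (k + 1) 1 = -hgckC q k 1 := by
  have hq' : (q : ℝ) ≠ 0 := by positivity
  have hc'' := neg_two_mul_succ_mul_hgckC_succ q k
  have hc' := hgckC'_eq_mul_gckC' hq k 1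
  have hc := add_two_mul_mul_hgckC' hq k 1
  rw [hc', ← hc''] at hc
  refine mul_left_cancel₀ hq' ?_
  linear_combination -hc

theorem abs_hgckC_le (hq : 0 < q) (k : ℕ) : |hgckC q k 1| ≤ ((2 * k).factorial : ℝ)⁻¹ := by
  induction k with
  | zero => simp [hgckC_zero_one hq]
  | succ k ih =>
    have hq1 : (1 : ℝ) ≤ q := by exact_mod_cast hq
    have hrec := congrArg abs (add_two_mul_mul_hgckC_succ hq k)
    rw [abs_neg, abs_mul, abs_of_pos (by positivity)] at hrec
    have hfac : ((2 * (k + 1)).factorial : ℝ) =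
        (1 + 2 * k) * (2 * (k + 1)) * (2 * k).factorial := by
      rw [show 2 * (k + 1) = 2 * k + 1 + 1 by ring, Nat.factorial_succ, Nat.factorial_succ]
      push_cast
      ring
    have hmul : (1 + 2 * k) * (2 * (k + 1)) * |hgckC q (k + 1) 1| ≤
        ((2 * k).factorial : ℝ)⁻¹ :=
      calc (1 + 2 * k) * (2 * (k + 1)) * |hgckC q (k + 1) 1|
        _ ≤ (q + 2 * k) * (2 * (k + 1)) * |hgckC q (k + 1) 1| := by gcongr
        _ ≤ ((2 * k).factorial : ℝ)⁻¹ := hrec.trans_le ih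
    rw [hfac, mul_inv]
    exact (le_inv_mul_iff₀ (by positivity)).2 hmul

theorem abs_hgckC'_le (hq : 0 < q) (k : ℕ) : |hgckC' q k 1| ≤ ((2 * k).factorial : ℝ)⁻¹ := by
  refine le_trans ?_ (abs_hgckC_le hq k)
  have hq' : (0 : ℝ) < q := by exact_mod_cast hq
  have habs := congrArg abs (add_two_mul_mul_hgckC' hq k 1)
  rw [abs_mul, abs_mul, abs_of_pos (by positivity : (0 : ℝ) < q + 2 * k), abs_of_pos hq'] at habs
  refine le_of_mul_le_mul_left ?_ (by positivity : (0 : ℝ) < q + 2 * k)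
  rw [habs]
  gcongr
  linarith [k.cast_nonneg (α := ℝ)]

end Coefficients

section SeriesForm

variable {F : Type*} [NormedAddCommGroup F] [NormedSpace ℝ F] [Mul F] {v : ℕ → F} {m p : ℕ}

theorem HGCKe_zero_right (hA : ∀ a : F, a * 0 = 0) (f : (Fin (p + 1) → ℝ) → F) :
    HGCKe v m p f 0 = fun x => lapSeries p (fun k => hgckC (m - p) k 1) f (sqCoords m p x) := by
  ext x
  simp [HGCKe, lapSeries, sqCoords, lapIterP_zero_fun, hA, hgckC_eq_pow_mul _ _ (rad m p x),
    mul_smul]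

theorem HGCKe_zero_left (f : (Fin (p + 1) → ℝ) → F) :
    HGCKe v m p 0 f = fun x => emb v m (xqpart m p x) *
      lapSeries p (fun k => hgckC' (m - p) k 1) f (sqCoords m p x) := by
  ext x
  simp [HGCKe, lapSeries, sqCoords, lapIterP_zero_fun, hgckC'_eq_pow_mul _ _ (rad m p x),
    mul_smul]

theorem GCKe_eq_lapSeries (f : (Fin (p + 1) → ℝ) → F) (x : Fin (m + 1) → ℝ) :
    GCKe v m p f x = lapSeries p (fun k => hgckC (m - p) k 1) f (sqCoords m p x) +
      emb v m (xqpart m p x) *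
        lapSeries p (fun k => gckC' (m - p) k 1) (DopP v p f) (sqCoords m p x) := by
  simp only [GCKe, lapSeries, sqCoords, hgckC_eq_pow_mul _ _ (rad m p x),
    gckC'_eq_pow_mul _ _ (rad m p x), mul_smul]

end SeriesForm

section Extensions

variable [CompleteSpace A] {v : ℕ → A} {m p : ℕ} {lmul : A →ₗ[ℝ] A →L[ℝ] A}
  {f : (Fin (p + 1) → ℝ) → A} {x : Fin (m + 1) → ℝ}

theorem Dbarop_HGCKe_zero_right (hv : IsCliffordFrame v m) (hA : IsLeftAltMul lmul)
    (hp : p < m) (hx : LapConvergentAt p f (sqCoords m p x)) :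
    Dbarop v m m (HGCKe v m p f 0) x = GCKe v m p (DbaropP v p f) x := by
  have hc := abs_hgckC_le (Nat.sub_pos_of_lt hp)
  have hΔ : lapP p f =ᶠ[𝓝 (projP m p x)] DopP v p (DbaropP v p f) := by
    filter_upwards [hx.1.eventually_analyticAt] with y hy
    exact (hv.DopP_DbaropP hA hp.le hy).symm
  rw [HGCKe_zero_right (fun a => by rw [← hA.lmul_apply, map_zero]),
    hv.Dbarop_comp_sqCoords hA hp.le (hx.differentiableAt hc), hA.DopSx_lapSeries _ hx hc,
    hx.pdSr_lapSeries hc, lapSeries_congr (f := lapP p f) _ hΔ, GCKe_eq_lapSeries,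
    DbaropP_eq_DopP_conjFrame hA hv, sub_eq_add_neg, ← hA.mul_neg, ← neg_smul,
    ← lapSeries_const_mul]
  simp only [neg_two_mul_succ_mul_hgckC_succ]

theorem Dbarop_HGCKe_zero_left (hv : IsCliffordFrame v m) (hA : IsLeftAltMul lmul)
    (hp : p < m) (hx : LapConvergentAt p f (sqCoords m p x)) :
    Dbarop v m m (HGCKe v m p 0 f) x = ((m - p : ℕ) : ℝ) • GCKe v m p f x := by
  have hq := Nat.sub_pos_of_lt hp
  have hc := abs_hgckC'_le hq
  rw [HGCKe_zero_left, hv.Dbarop_emb_xqpart_mul_comp_sqCoords hA hp.le (hx.differentiableAt hc),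
    hA.DopSx_lapSeries _ hx hc, add_right_comm, hx.smul_lapSeries_add_two_mul_smul_pdSr hc]
  simp only [add_two_mul_mul_hgckC' hq]
  simp only [hgckC'_eq_mul_gckC' hq, lapSeries_const_mul]
  rw [GCKe_eq_lapSeries, smul_add, hA.mul_smul]

end Extensions

section TubularDomains

variable {m p : ℕ}

theorem injP_projP_eq_xppart (hp : p ≤ m) (x : Fin (m + 1) → ℝ) :
    injP m p (projP m p x) = xppart m p x := by
  ext s
  by_cases hs : (s : ℕ) ≤ p
  · have hs' : (s : ℕ) < p + 1 := by lia
    simp [injP, hs, hs', xppart, projP_apply hp]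
  · have hs' : ¬(s : ℕ) < p + 1 := by lia
    simp [injP, hs, hs', xppart]

theorem xppart_add_xqpart (x : Fin (m + 1) → ℝ) : xppart m p x + xqpart m p x = x := by
  ext s
  by_cases hs : (s : ℕ) ≤ p <;> simp [xppart, xqpart, hs]

theorem xqpart_injP (y : Fin (p + 1) → ℝ) : xqpart m p (injP m p y) = 0 := by
  ext s
  by_cases hs : (s : ℕ) ≤ p
  · simp [xqpart, hs]
  · have hs' : ¬(s : ℕ) < p + 1 := by lia
    simp [xqpart, injP, hs']

theorem continuous_injP : Continuous (injP m p) := by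
  refine continuous_pi fun s => ?_
  by_cases hs : (s : ℕ) < p + 1
  · simpa [injP, hs] using continuous_apply _
  · simpa [injP, hs] using continuous_const

theorem continuous_sqCoords (hp : p ≤ m) : Continuous (sqCoords m p) :=
  continuous_iff_continuousAt.2 fun x => (hasFDerivAt_sqCoords hp x).continuousAt

theorem sqCoords_injP_add (hp : p ≤ m) (y : Fin (p + 1) → ℝ) {u : Fin (m + 1) → ℝ}
    (hu : ∀ s : Fin (m + 1), (s : ℕ) ≤ p → u s = 0) :
    sqCoords m p (injP m p y + u) = (y, ∑ s, u s ^ 2) := by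
  refine Prod.ext (funext fun s => ?_) ?_
  · have hs : (s : ℕ) ≤ p := by lia
    simp [sqCoords, projP_apply hp, injP, hs, hu (s.castLE (by lia)) hs]
  · refine (rad_sq _).trans (Finset.sum_congr rfl fun s _ => ?_)
    by_cases hs : (s : ℕ) ≤ p
    · simp [xqpart, hs, hu s hs]
    · have hs' : ¬(s : ℕ) < p + 1 := by lia
      simp [xqpart, hs, injP, hs']

theorem sqCoords_injP (hp : p ≤ m) (y : Fin (p + 1) → ℝ) : sqCoords m p (injP m p y) = (y, 0) := by
  simpa using sqCoords_injP_add hp y (u := 0) fun _ _ => rfl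

theorem sqCoords_pt (hp : p ≤ m) {w : Fin (m + 1) → ℝ}
    (hw : ∀ s : Fin (m + 1), (s : ℕ) ≤ p → w s = 0) (hw1 : ∑ s, w s ^ 2 = 1)
    (y : Fin (p + 1) → ℝ) (r : ℝ) : sqCoords m p (pt m p w y r) = (y, r ^ 2) := by
  rw [pt, sqCoords_injP_add hp y fun s hs => by simp [hw s hs]]
  simp [mul_pow, ← Finset.mul_sum, hw1]

theorem sqCoords_injP_projP_add_smul_xqpart (hp : p ≤ m) (x : Fin (m + 1) → ℝ) (t : ℝ) :
    sqCoords m p (injP m p (projP m p x) + t • xqpart m p x) =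
      (projP m p x, t ^ 2 * rad m p x ^ 2) := by
  rw [sqCoords_injP_add hp _ fun s hs => by simp [xqpart, hs], rad_sq]
  simp [mul_pow, Finset.mul_sum]

/-- `D` is an open neighbourhood of `Ω₀ × {0}` in `Ω₀ × ℝ` whose fibres are star-shaped about
`0`. -/
structure IsTube {E : Type*} [TopologicalSpace E] (Ω₀ : Set E) (D : Set (E × ℝ)) : Prop where
  isOpen : IsOpen D
  fst_mem : ∀ z ∈ D, z.1 ∈ Ω₀
  base_mem : ∀ y ∈ Ω₀, (y, 0) ∈ D
  shrink : ∀ z ∈ D, ∀ t ∈ Set.Icc (0 : ℝ) 1, (z.1, t * z.2) ∈ D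

theorem isConnected_of_forall_segment_subset {E : Type*} [AddCommGroup E] [Module ℝ E]
    [TopologicalSpace E] [IsTopologicalAddGroup E] [ContinuousSMul ℝ E] {S B : Set E}
    (hB : IsConnected B) (hBS : B ⊆ S) (hseg : ∀ z ∈ S, ∃ b ∈ B, segment ℝ b z ⊆ S) :
    IsConnected S := by
  obtain ⟨b₀, hb₀⟩ := hB.nonempty
  refine ⟨⟨b₀, hBS hb₀⟩, isPreconnected_of_forall b₀ fun z hz => ?_⟩
  obtain ⟨b, hb, hbz⟩ := hseg z hz
  exact ⟨B ∪ segment ℝ b z, Set.union_subset hBS hbz, Or.inl hb₀,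
    Or.inr (right_mem_segment ℝ b z), hB.isPreconnected.union b hb (left_mem_segment ℝ b z)
      (convex_segment b z).isPreconnected⟩

variable {Ω₀ : Set (Fin (p + 1) → ℝ)} {D : Set ((Fin (p + 1) → ℝ) × ℝ)}

theorem IsTube.isConnected_preimage_sqCoords (hD : IsTube Ω₀ D) (hp : p ≤ m)
    (hΩ₀ : IsConnected Ω₀) : IsConnected (sqCoords m p ⁻¹' D) := by
  refine isConnected_of_forall_segment_subset (hΩ₀.image _ continuous_injP.continuousOn) ?_
    fun x hx => ⟨injP m p (projP m p x), ⟨_, hD.fst_mem _ hx, rfl⟩, ?_⟩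
  · rintro _ ⟨y, hy, rfl⟩
    rw [Set.mem_preimage, sqCoords_injP hp]
    exact hD.base_mem y hy
  · have hsub : x - injP m p (projP m p x) = xqpart m p x := by
      rw [injP_projP_eq_xppart hp, sub_eq_iff_eq_add', xppart_add_xqpart]
    rw [segment_eq_image', hsub]
    rintro _ ⟨t, ht, rfl⟩
    rw [Set.mem_preimage, sqCoords_injP_projP_add_smul_xqpart hp]
    exact hD.shrink _ hx _ ⟨sq_nonneg t, pow_le_one₀ ht.1 ht.2⟩

theorem IsTube.isConnected_setOf_sq (hD : IsTube Ω₀ D) (hΩ₀ : IsConnected Ω₀) :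
    IsConnected {z : (Fin (p + 1) → ℝ) × ℝ | (z.1, z.2 ^ 2) ∈ D} := by
  refine isConnected_of_forall_segment_subset (hΩ₀.prod (isConnected_singleton (x := (0 : ℝ)))) ?_
    fun z hz => ⟨(z.1, 0), ⟨hD.fst_mem (z.1, z.2 ^ 2) hz, rfl⟩, ?_⟩
  · rintro ⟨y, _⟩ ⟨hy, rfl⟩
    simpa using hD.base_mem y hy
  · rw [segment_eq_image']
    rintro _ ⟨t, ht, rfl⟩
    simpa [mul_pow] using hD.shrink _ hz (t ^ 2) ⟨sq_nonneg t, pow_le_one₀ ht.1 ht.2⟩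

variable [Nontrivial A] {lmul : A →ₗ[ℝ] A →L[ℝ] A} {v : ℕ → A}

theorem pSym_preimage_sqCoords (hv : IsCliffordFrame v m) (hA : IsLeftAltMul lmul)
    (hp : p ≤ m) (D : Set ((Fin (p + 1) → ℝ) × ℝ)) : PSym v m p (sqCoords m p ⁻¹' D) := by
  intro x hx w hw
  rw [← injP_projP_eq_xppart hp, Set.mem_preimage, ← pt,
    sqCoords_pt hp hw.1 (hv.sum_sq_eq_one_of_mem_Sph hA hw)]
  exact hx

theorem IsTube.sliceDomain_preimage_sqCoords (hD : IsTube Ω₀ D) (hv : IsCliffordFrame v m)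
    (hA : IsLeftAltMul lmul) (hp : p ≤ m) (hΩ₀ : IsConnected Ω₀) :
    SliceDomain v m p (sqCoords m p ⁻¹' D) := by
  refine ⟨hD.isOpen.preimage (continuous_sqCoords hp), hD.isConnected_preimage_sqCoords hp hΩ₀,
    ?_, fun w hw => ?_⟩
  · obtain ⟨y, hy⟩ := hΩ₀.nonempty
    exact ⟨injP m p y, by simpa [sqCoords_injP hp] using hD.base_mem y hy, xqpart_injP y⟩
  · have hw1 := hv.sum_sq_eq_one_of_mem_Sph hA hw
    simpa only [sliceSet, Set.mem_preimage, sqCoords_pt hp hw.1 hw1] using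
      hD.isConnected_setOf_sq hΩ₀

end TubularDomains

section ConvergenceDomain

variable {F : Type*} [NormedAddCommGroup F] [NormedSpace ℝ F] {p : ℕ}
  {f : (Fin (p + 1) → ℝ) → F} {z : (Fin (p + 1) → ℝ) × ℝ}

theorem HasLapGrowthAt.eventually {Q : ℝ} {y : Fin (p + 1) → ℝ} (hf : HasLapGrowthAt p f Q y) :
    ∀ᶠ u in 𝓝 y, HasLapGrowthAt p f Q u := by
  obtain ⟨C, hC⟩ := hf
  filter_upwards [eventually_eventually_nhds.2 hC] with u hu
  exact ⟨C, hu⟩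

theorem lapConvergentAt_zero [CompleteSpace F] {y : Fin (p + 1) → ℝ} (hf : AnalyticAt ℝ f y) :
    LapConvergentAt p f (y, 0) := by
  obtain ⟨Q, hQ, hgrowth⟩ := exists_hasLapGrowthAt hf
  exact ⟨hf, Q, hQ, hgrowth, by simp⟩

theorem LapConvergentAt.mul_snd (hz : LapConvergentAt p f z) {t : ℝ} (ht : t ∈ Set.Icc (0 : ℝ) 1) :
    LapConvergentAt p f (z.1, t * z.2) := by
  obtain ⟨hf, Q, hQ, hgrowth, hρ⟩ := hz
  refine ⟨hf, Q, hQ, hgrowth, lt_of_le_of_lt ?_ hρ⟩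
  rw [abs_mul, abs_of_nonneg ht.1]
  gcongr
  exact mul_le_of_le_one_left (abs_nonneg _) ht.2

theorem isOpen_setOf_lapConvergentAt [CompleteSpace F] (f : (Fin (p + 1) → ℝ) → F) :
    IsOpen {z | LapConvergentAt p f z} := by
  refine isOpen_iff_mem_nhds.2 ?_
  rintro z ⟨hf, Q, hQ, hgrowth, hρ⟩
  have hρ' : ∀ᶠ u in 𝓝 z, Q * |u.2| < 1 :=
    (by fun_prop : Continuous fun u : (Fin (p + 1) → ℝ) × ℝ => Q * |u.2|).continuousAt.eventually_lt
      continuousAt_const hρ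
  filter_upwards [continuousAt_fst.eventually hf.eventually_analyticAt,
    continuousAt_fst.eventually hgrowth.eventually, hρ'] with u hfu hgrowthu hρu
  exact ⟨hfu, Q, hQ, hgrowthu, hρu⟩

theorem isTube_lapConvergentAt [CompleteSpace F] {Ω₀ : Set (Fin (p + 1) → ℝ)} (hΩ₀ : IsOpen Ω₀)
    (hf : AnalyticOnNhd ℝ f Ω₀) : IsTube Ω₀ {z | z.1 ∈ Ω₀ ∧ LapConvergentAt p f z} where
  isOpen := (hΩ₀.preimage continuous_fst).inter (isOpen_setOf_lapConvergentAt f)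
  fst_mem _ hz := hz.1
  base_mem y hy := ⟨hy, lapConvergentAt_zero (hf y hy)⟩
  shrink _ hz _ ht := ⟨hz.1, hz.2.mul_snd ht⟩

end ConvergenceDomain

section Main

theorem IsAltStarAlg.exists_isLeftAltMul {conj : A → A} (H : IsAltStarAlg A conj) :
    ∃ lmul : A →ₗ[ℝ] A →L[ℝ] A, IsLeftAltMul lmul :=
  have := H.finDim
  ⟨LinearMap.toContinuousLinearMap.toLinearMap ∘ₗ
      LinearMap.mk₂ ℝ (· * ·) H.add_mul' H.smul_mul' H.mul_add' H.mul_smul',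
    fun _ _ => rfl, H.one_mul', H.alt_left⟩

theorem IsHypBasis.isCliffordFrame {conj : A → A} {lmul : A →ₗ[ℝ] A →L[ℝ] A} {v : ℕ → A} {m : ℕ}
    (hv : IsHypBasis A conj v m) (hA : IsLeftAltMul lmul) : IsCliffordFrame v m where
  v_zero := hv.v_zero
  mul_self s hs hsm := by
    have hconj := eq_neg_of_add_eq_zero_right (hv.trace_zero s hs hsm)
    rw [← hv.norm_one s hs hsm, hconj, hA.mul_neg, neg_neg]
  anticomm := hv.anticomm

theorem dbar_hgck_gck_general [CompleteSpace A] [Nontrivial A] {lmul : A →ₗ[ℝ] A →L[ℝ] A}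
    (hA : IsLeftAltMul lmul) {v : ℕ → A} {m p : ℕ} (hv : IsCliffordFrame v m) (hp : p < m)
    {Ω₀ : Set (Fin (p + 1) → ℝ)} (hΩ₀ : IsOpen Ω₀) (hΩ₀conn : IsConnected Ω₀)
    {f₀ : (Fin (p + 1) → ℝ) → A} (hf₀ : AnalyticOnNhd ℝ f₀ Ω₀) :
    ∃ Ω : Set (Fin (m + 1) → ℝ),
      PSym v m p Ω ∧ SliceDomain v m p Ω ∧
      injP m p '' Ω₀ ⊆ Ω ∧ Ω ⊆ Omega0star m p Ω₀ ∧
      (∀ x ∈ Ω,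
        Dbarop v m m (HGCKe v m p f₀ 0) x = GCKe v m p (DbaropP v p f₀) x) ∧
      (∀ x ∈ Ω,
        Dbarop v m m (HGCKe v m p 0 f₀) x = (((m - p : ℕ) : ℝ)) • GCKe v m p f₀ x) := by
  have htube := isTube_lapConvergentAt hΩ₀ hf₀
  refine ⟨_, pSym_preimage_sqCoords hv hA hp.le _,
    htube.sliceDomain_preimage_sqCoords hv hA hp.le hΩ₀conn, ?_, fun x hx => hx.1,
    fun x hx => Dbarop_HGCKe_zero_right hv hA hp hx.2,
    fun x hx => Dbarop_HGCKe_zero_left hv hA hp hx.2⟩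
  rintro _ ⟨y, hy, rfl⟩
  rw [Set.mem_preimage, sqCoords_injP hp.le]
  exact htube.base_mem y hy

end Main

/-- `D̄_x (HGCK[f₀, 0]) = GCK[D̄_{x_p} f₀]` and `D̄_x (HGCK[0, f₀]) = q · GCK[f₀]`
(on the p-symmetric slice domain where the extensions are defined). -/
theorem dbar_hgck_gck
    {A : Type*} [NormedAddCommGroup A] [NormedSpace ℝ A] [Mul A] [One A]
    (conj : A → A) (H : IsAltStarAlg A conj)
    (v : ℕ → A) (m p : ℕ) (hv : IsHypBasis A conj v m) (hp : p < m)
    (Ω₀ : Set (Fin (p + 1) → ℝ)) (hΩ₀ : IsOpen Ω₀) (hΩ₀conn : IsConnected Ω₀)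
    (f₀ : (Fin (p + 1) → ℝ) → A) (hf₀ : AnalyticOnNhd ℝ f₀ Ω₀) :
    ∃ Ω : Set (Fin (m + 1) → ℝ),
      PSym v m p Ω ∧ SliceDomain v m p Ω ∧
      injP m p '' Ω₀ ⊆ Ω ∧ Ω ⊆ Omega0star m p Ω₀ ∧
      (∀ x ∈ Ω,
        Dbarop v m m (HGCKe v m p f₀ 0) x = GCKe v m p (DbaropP v p f₀) x) ∧
      (∀ x ∈ Ω,
        Dbarop v m m (HGCKe v m p 0 f₀) x = (((m - p : ℕ) : ℝ)) • GCKe v m p f₀ x) := by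
  have := H.finDim
  have : CompleteSpace A := FiniteDimensional.complete ℝ A
  have : Nontrivial A := Module.nontrivial_of_finrank_pos (zero_lt_one.trans H.one_lt_finrank)
  obtain ⟨lmul, hA⟩ := H.exists_isLeftAltMul
  exact dbar_hgck_gck_general hA (hv.isCliffordFrame hA) hp hΩ₀ hΩ₀conn hf₀

end GPSM
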